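/- arXiv:1908.03912 — 3 statements merged into one kernel-verified Lean document; each statement's English description precedes it below -/
import Mathlib

section
/- For every integer n ≥ 1 and every integer k with 1 ≤ k ≤ n, the number of separable permutations π of [n] with iar(π) = k equals the number of separable permutations π of [n] with comp(π) = k; that is, the statistics iar and comp are equidistributed on separable permutations of each length. -/
/-!
A separable permutation of length at least two is a direct sum or a skew sum of two shorter
separable permutations (`exists_cut`). Choosing the left summand indecomposable makes this
decomposition unique, so separable permutations of `[n]` correspond bijectively to binary trees
with `n` leaves, inner nodes labelled `sum` or `skew`, in which the left child of a node never
carries the label of that node (`exists_tree`, `tree_unique`). Under this correspondence `iar` and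
`comp` become the recursively defined statistics `Tree.iar` and `Tree.comp`.

On normal trees, those that are neither `leaf` nor `sum leaf b` are obtained uniquely in two ways
from an arbitrary pair `(a, b)` of normal trees:
* as `sum a b` if `a` is a skew node, and as `skew a b` otherwise; this tree has the `iar` of `a`;
* as `Tree.graft a b`, which replaces the first sum-component `α` of `a` by `skew α.rev b`; this
  tree has the `comp` of `a`.

Matching the two descriptions recursively gives a size-preserving injection `Tree.phi` of the
normal trees into themselves that carries `iar` to `comp`. There are finitely many normal trees of
each size, so `Tree.phi` is a bijection on them.
-/

/-- The pattern `2413` as a permutation of `Fin 4` (zero-indexed values `1,3,0,2`). -/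
def pattern2413 : Equiv.Perm (Fin 4) :=
  ⟨![1, 3, 0, 2], ![2, 0, 3, 1], by decide, by decide⟩

/-- The pattern `3142` as a permutation of `Fin 4` (zero-indexed values `2,0,3,1`). -/
def pattern3142 : Equiv.Perm (Fin 4) :=
  ⟨![2, 0, 3, 1], ![1, 3, 0, 2], by decide, by decide⟩

/-- `ContainsPat π σ` : the permutation `π` contains the pattern `σ`. -/
def ContainsPat {n m : ℕ} (π : Equiv.Perm (Fin n)) (σ : Equiv.Perm (Fin m)) : Prop :=
  ∃ f : Fin m ↪o Fin n, ∀ a b : Fin m, σ a < σ b ↔ π (f a) < π (f b)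

/-- A separable permutation avoids both `2413` and `3142`. -/
def Separable {n : ℕ} (π : Equiv.Perm (Fin n)) : Prop :=
  ¬ ContainsPat π pattern2413 ∧ ¬ ContainsPat π pattern3142

/-- `iar π` : the length of the initial ascending run of `π`, i.e. the largest
`k ≤ n` such that the first `k` values of `π` are increasing. -/
def iar {n : ℕ} (π : Equiv.Perm (Fin n)) : ℕ :=
  Nat.findGreatest (fun k => ∀ i j : Fin n, (i : ℕ) < (j : ℕ) → (j : ℕ) < k → π i < π j) n

/-- `p n k` : the number of separable permutations of `[n]` with `iar` equal to `k`. -/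
noncomputable def p (n k : ℕ) : ℕ :=
  Nat.card {π : Equiv.Perm (Fin n) // Separable π ∧ iar π = k}

/-- `compStat π` : the number of indices `k ∈ {1,…,n}` such that the first `k`
values of `π` are exactly `{1,…,k}`. -/
def compStat {n : ℕ} (π : Equiv.Perm (Fin n)) : ℕ :=
  ((Finset.Icc 1 n).filter
    (fun k => ∀ i : Fin n, (i : ℕ) < k → (π i : ℕ) < k)).card

namespace SepTree

/-! ### Trees -/

/-- Binary trees encoding iterated direct sums and skew sums of the one-point permutation. -/
inductive Tree : Type
  | leaf : Tree
  | sum : Tree → Tree → Tree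
  | skew : Tree → Tree → Tree

namespace Tree

/-- The number of leaves, i.e. the length of the encoded permutation. -/
def size : Tree → ℕ
  | leaf => 1
  | sum a b => a.size + b.size
  | skew a b => a.size + b.size

/-- The root is a `sum` node. -/
def IsSum : Tree → Prop
  | sum _ _ => True
  | _ => False

/-- The root is a `skew` node. -/
def IsSkew : Tree → Prop
  | skew _ _ => True
  | _ => False

/-- Normal trees: no left child has the same label as its parent. -/
def Normal : Tree → Prop
  | leaf => True
  | sum a b => ¬ a.IsSum ∧ a.Normal ∧ b.Normal
  | skew a b => ¬ a.IsSkew ∧ a.Normal ∧ b.Normal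

/-- The encoded permutation in one-line notation, zero-indexed. Only the values at arguments
below `size` are meaningful. -/
def ev : Tree → ℕ → ℕ
  | leaf, i => i
  | sum a b, i => if i < a.size then a.ev i else a.size + b.ev (i - a.size)
  | skew a b, i => if i < a.size then b.size + a.ev i else b.ev (i - a.size)

/-- The length of the initial ascending run of the permutation encoded by a normal tree. -/
def iar : Tree → ℕ
  | leaf => 1
  | sum leaf b => 1 + b.iar
  | sum (sum a c) _ => (sum a c).iar
  | sum (skew a c) _ => (skew a c).iar
  | skew a _ => a.iar

/-- The number of sum-components of the permutation encoded by a normal tree. -/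
def comp : Tree → ℕ
  | leaf => 1
  | sum _ b => 1 + b.comp
  | skew _ _ => 1

/-- Exchange of the two labels, the tree counterpart of complementing a permutation. -/
def rev : Tree → Tree
  | leaf => leaf
  | sum a b => skew a.rev b.rev
  | skew a b => sum a.rev b.rev

/-- Replaces the first sum-component `α` of `a` by `skew α.rev b`. -/
def graft : Tree → Tree → Tree
  | sum x y, b => sum (skew x.rev b) y
  | leaf, b => skew leaf b
  | skew x y, b => skew (skew x y).rev b

/-- The transformation of normal trees that carries `iar` to `comp`. -/
def phi : Tree → Tree
  | leaf => leaf
  | sum leaf b => sum leaf b.phi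
  | sum (sum a c) b => graft (sum a c).phi b
  | sum (skew a c) b => graft (skew a c).phi b
  | skew a b => graft a.phi b

theorem size_pos (t : Tree) : 0 < t.size := by
  induction t <;> simp [size] <;> omega

theorem rev_rev (t : Tree) : t.rev.rev = t := by
  induction t <;> simp_all [rev]

theorem rev_inj {s t : Tree} (h : s.rev = t.rev) : s = t := by
  rw [← rev_rev s, h, rev_rev]

theorem size_rev (t : Tree) : t.rev.size = t.size := by
  induction t <;> simp_all [rev, size]

theorem isSkew_rev (t : Tree) : t.rev.IsSkew ↔ t.IsSum := by
  cases t <;> simp [rev, IsSkew, IsSum]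

theorem isSum_rev (t : Tree) : t.rev.IsSum ↔ t.IsSkew := by
  cases t <;> simp [rev, IsSkew, IsSum]

theorem normal_rev {t : Tree} (h : t.Normal) : t.rev.Normal := by
  induction t with
  | leaf => simp [rev, Normal]
  | sum a b iha ihb =>
    exact ⟨by rw [isSkew_rev]; exact h.1, iha h.2.1, ihb h.2.2⟩
  | skew a b iha ihb =>
    exact ⟨by rw [isSum_rev]; exact h.1, iha h.2.1, ihb h.2.2⟩

theorem size_graft (a b : Tree) : (graft a b).size = a.size + b.size := by
  cases a <;> simp [graft, size, size_rev, rev]; omega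

theorem comp_graft (a b : Tree) : (graft a b).comp = a.comp := by
  cases a <;> simp [graft, comp]

theorem normal_graft {a b : Tree} (ha : a.Normal) (hb : b.Normal) : (graft a b).Normal := by
  cases a with
  | leaf => exact ⟨by simp [IsSkew], trivial, hb⟩
  | sum x y =>
    exact ⟨by simp [IsSum], ⟨by rw [isSkew_rev]; exact ha.1, normal_rev ha.2.1, hb⟩, ha.2.2⟩
  | skew x y => exact ⟨by rw [isSkew_rev]; simp [IsSum], normal_rev ha, hb⟩

theorem graft_inj {a b a' b' : Tree} (h : graft a b = graft a' b') : a = a' ∧ b = b' := by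
  cases a <;> cases a' <;> simp [graft, rev] at h ⊢
  · exact h
  · exact ⟨⟨rev_inj h.1.1, h.2⟩, h.1.2⟩
  · exact ⟨⟨rev_inj h.1.1, rev_inj h.1.2⟩, h.2⟩

theorem graft_ne_leaf (a b : Tree) : graft a b ≠ leaf := by
  cases a <;> simp [graft]

theorem graft_ne_sum_leaf (a b c : Tree) : graft a b ≠ sum leaf c := by
  cases a <;> simp [graft]

theorem size_phi (t : Tree) : t.phi.size = t.size := by
  fun_induction phi t <;> simp_all [size, size_graft]

theorem normal_phi {t : Tree} (h : t.Normal) : t.phi.Normal := by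
  fun_induction phi t with
  | case1 => exact h
  | case2 b ih => exact ⟨by simp [IsSum], trivial, ih h.2.2⟩
  | case3 a c b ih => exact normal_graft (ih h.2.1) h.2.2
  | case4 a c b ih => exact normal_graft (ih h.2.1) h.2.2
  | case5 a b ih => exact normal_graft (ih h.2.1) h.2.2

theorem comp_phi (t : Tree) : t.phi.comp = t.iar := by
  fun_induction phi t <;> simp_all [comp, iar, comp_graft]

theorem phi_inj {s t : Tree} (hs : s.Normal) (ht : t.Normal) (h : s.phi = t.phi) : s = t := by
  fun_induction phi s generalizing t with
  | case1 =>
    fun_cases phi t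
    · rfl
    · cases h
    all_goals exact absurd h.symm (graft_ne_leaf _ _)
  | case2 b ih =>
    fun_cases phi t
    · cases h
    · rw [ih hs.2.2 ht.2.2 (by simpa [phi] using h)]
    all_goals exact absurd h.symm (graft_ne_sum_leaf _ _ _)
  | case3 a c b ih => exact absurd trivial hs.1
  | case4 a c b ih =>
    fun_cases phi t
    · exact absurd h (graft_ne_leaf _ _)
    · exact absurd h (graft_ne_sum_leaf _ _ _)
    · exact absurd trivial ht.1
    · obtain ⟨h1, h2⟩ := graft_inj h
      rw [ih hs.2.1 ht.2.1 h1, h2]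
    · obtain ⟨h1, h2⟩ := graft_inj h
      exact absurd (ih hs.2.1 ht.2.1 h1 ▸ trivial) ht.1
  | case5 a b ih =>
    fun_cases phi t
    · exact absurd h (graft_ne_leaf _ _)
    · exact absurd h (graft_ne_sum_leaf _ _ _)
    · exact absurd trivial ht.1
    · obtain ⟨h1, h2⟩ := graft_inj h
      exact absurd ((ih hs.2.1 ht.2.1 h1).symm ▸ trivial) hs.1
    · obtain ⟨h1, h2⟩ := graft_inj h
      rw [ih hs.2.1 ht.2.1 h1, h2]

end Tree

/-! ### Separable sequences -/

/-- The values of `f` on `[0, n)` are distinct and contain neither `2413` nor `3142`. -/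
structure SepSeq {α : Type*} [LinearOrder α] (n : ℕ) (f : ℕ → α) : Prop where
  inj : ∀ i j, i < j → j < n → f i ≠ f j
  no2413 : ∀ i j k l, i < j → j < k → k < l → l < n → ¬ (f k < f i ∧ f i < f l ∧ f l < f j)
  no3142 : ∀ i j k l, i < j → j < k → k < l → l < n → ¬ (f j < f l ∧ f l < f i ∧ f i < f k)

/-- Position `m` splits `f` on `[0, n)` into a direct sum. -/
def SumCut {α : Type*} [LinearOrder α] (n : ℕ) (f : ℕ → α) (m : ℕ) : Prop :=
  0 < m ∧ m < n ∧ ∀ i j, i < m → m ≤ j → j < n → f i < f j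

/-- Position `m` splits `f` on `[0, n)` into a skew sum. -/
def SkewCut {α : Type*} [LinearOrder α] (n : ℕ) (f : ℕ → α) (m : ℕ) : Prop :=
  0 < m ∧ m < n ∧ ∀ i j, i < m → m ≤ j → j < n → f j < f i

/-- A separable sequence stays decomposable when one term is appended to a direct sum. Given the
minimal cut `m`, the only case in which neither `m` nor `n` is a cut is that `f n` lies strictly
inside the range of `f` on `[0, m)`; then either a `3142` ending with `f m`, `f n` appears or
there is a smaller cut. -/
theorem cut_step {α : Type*} [LinearOrder α] {n : ℕ} {f : ℕ → α} (hf : SepSeq (n + 1) f)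
    (h : ∃ m, SumCut n f m) : ∃ m, SumCut (n + 1) f m ∨ SkewCut (n + 1) f m := by
  classical
  obtain ⟨h0, hn, hm⟩ := Nat.find_spec h
  have hmin := fun k => @Nat.find_min _ _ h k
  generalize Nat.find h = m at *
  have hne : ∀ i, i < n → f i ≠ f n := fun i hi => hf.inj i n hi (by omega)
  by_cases h1 : ∀ i, i < m → f i < f n
  · refine ⟨m, Or.inl ⟨h0, by omega, fun i j hi hj hjn => ?_⟩⟩
    rcases Nat.lt_succ_iff_lt_or_eq.1 hjn with hj' | rfl
    · exact hm i j hi hj hj'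
    · exact h1 i hi
  by_cases h2 : ∀ i, i < n → f n < f i
  · refine ⟨n, Or.inr ⟨by omega, by omega, fun i j hi hj hjn => ?_⟩⟩
    obtain rfl : j = n := by omega
    exact h2 i hi
  exfalso
  push Not at h1 h2
  have h1' : ∃ u, u < m ∧ f n < f u := by
    obtain ⟨u, hu, hu'⟩ := h1
    exact ⟨u, hu, lt_of_le_of_ne hu' (hne u (by omega)).symm⟩
  obtain ⟨w, hw, hw'⟩ := h2
  have hw' := lt_of_le_of_ne hw' (hne w hw)
  obtain ⟨hu, hu'⟩ := Nat.find_spec h1'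
  have humin := fun k => @Nat.find_min _ _ h1' k
  generalize Nat.find h1' = u at *
  have hlow : ∀ i, i < u → f i < f n := fun i hi =>
    lt_of_le_of_ne (not_lt.1 fun hc => humin i hi ⟨by omega, hc⟩) (hne i (by omega))
  have hwm : w < m := by
    by_contra hc
    exact absurd (hm u w hu (by omega) hw) (not_lt.2 (hw'.trans hu').le)
  by_cases h3 : ∃ v, u < v ∧ v < m ∧ f v < f n
  · obtain ⟨v, huv, hv, hv'⟩ := h3
    exact hf.no3142 u v m n huv hv hn (by omega) ⟨hv', hu', hm u m hu le_rfl hn⟩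
  · push Not at h3
    have hwu : w < u := by
      by_contra hc
      rcases Nat.lt_or_eq_of_le (not_lt.1 hc) with hc | rfl
      · exact absurd hw' (not_lt.2 (h3 w hc hwm))
      · exact absurd hw' (not_lt.2 hu'.le)
    refine hmin u hu ⟨by omega, by omega, fun i j hi hj hjn => ?_⟩
    by_cases hjm : j < m
    · rcases Nat.lt_or_eq_of_le hj with hj | rfl
      · exact (hlow i hi).trans_le (h3 j hj hjm)
      · exact (hlow i hi).trans hu'
    · exact hm i j (by omega) (by omega) hjn

theorem SepSeq.mono {α : Type*} [LinearOrder α] {n m : ℕ} {f : ℕ → α} (hf : SepSeq n f)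
    (h : m ≤ n) : SepSeq m f :=
  ⟨fun i j hi hj => hf.inj i j hi (by omega),
   fun i j k l a b c d => hf.no2413 i j k l a b c (by omega),
   fun i j k l a b c d => hf.no3142 i j k l a b c (by omega)⟩

theorem exists_cut {α : Type*} [LinearOrder α] {n : ℕ} {f : ℕ → α} (hf : SepSeq (n + 2) f) :
    ∃ m, SumCut (n + 2) f m ∨ SkewCut (n + 2) f m := by
  induction n with
  | zero =>
    refine ⟨1, (lt_or_gt_of_ne (hf.inj 0 1 (by omega) (by omega))).imp (fun h => ?_) (fun h => ?_)⟩
    all_goals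
      refine ⟨by omega, by omega, fun i j hi hj hjn => ?_⟩
      obtain rfl : i = 0 := by omega
      obtain rfl : j = 1 := by omega
      exact h
  | succ n ih =>
    obtain ⟨m, hm | hm⟩ := ih (hf.mono (by omega))
    · exact cut_step hf ⟨m, hm⟩
    -- Complementing exchanges the two patterns and the two kinds of cuts.
    · have hd : SepSeq (n + 2 + 1) (fun i => OrderDual.toDual (f i)) :=
        ⟨fun i j hi hj h => hf.inj i j hi hj h,
         fun i j k l a b c d e => hf.no3142 i j k l a b c d ⟨e.2.2, e.2.1, e.1⟩,
         fun i j k l a b c d e => hf.no2413 i j k l a b c d ⟨e.2.2, e.2.1, e.1⟩⟩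
      obtain ⟨m, hm | hm⟩ := cut_step hd ⟨m, hm⟩
      · exact ⟨m, Or.inr hm⟩
      · exact ⟨m, Or.inl hm⟩

/-- A separable permutation of `[0, n)`. -/
structure SepPerm (n : ℕ) (f : ℕ → ℕ) : Prop where
  lt : ∀ i, i < n → f i < n
  sep : SepSeq n f

theorem SepSeq.injOn {n : ℕ} {f : ℕ → ℕ} (hf : SepSeq n f) {s : Set ℕ} (hs : ∀ x ∈ s, x < n) :
    Set.InjOn f s := by
  intro i hi j hj h
  rcases lt_trichotomy i j with hij | rfl | hij
  · exact absurd h (hf.inj i j hij (hs j hj))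
  · rfl
  · exact absurd h.symm (hf.inj j i hij (hs i hi))

/-- Pigeonhole principle for `f` mapping the positions `[a, b)` into the values `[c, d)`. -/
theorem SepSeq.card_le {n : ℕ} {f : ℕ → ℕ} (hf : SepSeq n f) {a b c d : ℕ} (hb : b ≤ n)
    (h : ∀ i, a ≤ i → i < b → c ≤ f i ∧ f i < d) : b - a ≤ d - c := by
  have := Finset.card_le_card_of_injOn (s := Finset.Ico a b) (t := Finset.Ico c d) f
    (fun i hi => by
      have hi' := Finset.mem_Ico.1 hi
      exact Finset.mem_coe.2 (Finset.mem_Ico.2 (h i hi'.1 hi'.2)))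
    (hf.injOn (fun x hx => by
      have := Finset.mem_Ico.1 (Finset.mem_coe.1 hx)
      omega))
  simpa using this

theorem sumCut_values {n m : ℕ} {f : ℕ → ℕ} (hf : SepPerm n f) (h : SumCut n f m) :
    (∀ i, i < m → f i < m) ∧ ∀ i, m ≤ i → i < n → m ≤ f i := by
  obtain ⟨h0, hn, hm⟩ := h
  constructor
  · intro i hi
    have := hf.sep.card_le (a := m) (b := n) (c := f i + 1) (d := n) le_rfl
      (fun j hj hjn => ⟨hm i j hi hj hjn, hf.lt j hjn⟩)
    have := hf.lt i (by omega)
    omega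
  · intro j hj hjn
    have := hf.sep.card_le (a := 0) (b := m) (c := 0) (d := f j) (by omega)
      (fun i _ hi => ⟨Nat.zero_le _, hm i j hi hj hjn⟩)
    omega

theorem skewCut_values {n m : ℕ} {f : ℕ → ℕ} (hf : SepPerm n f) (h : SkewCut n f m) :
    (∀ i, i < m → n - m ≤ f i) ∧ ∀ i, m ≤ i → i < n → f i < n - m := by
  obtain ⟨h0, hn, hm⟩ := h
  constructor
  · intro i hi
    have := hf.sep.card_le (a := m) (b := n) (c := 0) (d := f i) le_rfl
      (fun j hj hjn => ⟨Nat.zero_le _, hm i j hi hj hjn⟩)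
    omega
  · intro j hj hjn
    have := hf.sep.card_le (a := 0) (b := m) (c := f j + 1) (d := n) (by omega)
      (fun i _ hi => ⟨hm i j hi hj hjn, hf.lt i (by omega)⟩)
    have := hf.lt j hjn
    omega

/-! ### The permutation of a tree -/

open SepTree.Tree

theorem ev_lt (t : Tree) : ∀ i, i < t.size → t.ev i < t.size := by
  induction t with
  | leaf => simp [ev]
  | sum a b iha ihb =>
    intro i hi
    simp only [ev, size] at *
    split_ifs with h
    · have := iha i h; omega
    · have := ihb (i - a.size) (by omega); omega
  | skew a b iha ihb =>
    intro i hi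
    simp only [ev, size] at *
    split_ifs with h
    · have := iha i h; omega
    · have := ihb (i - a.size) (by omega); omega

theorem sumCut_sum (a b : Tree) : SumCut (sum a b).size (sum a b).ev a.size := by
  refine ⟨a.size_pos, by have := b.size_pos; simp [size, this], fun i j hi hj hjn => ?_⟩
  have := ev_lt a i hi
  simp only [ev, if_pos hi, if_neg (not_lt.2 hj)]
  omega

theorem skewCut_skew (a b : Tree) : SkewCut (skew a b).size (skew a b).ev a.size := by
  refine ⟨a.size_pos, by have := b.size_pos; simp [size, this], fun i j hi hj hjn => ?_⟩
  simp only [size] at hjn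
  have := ev_lt b (j - a.size) (by omega)
  simp only [ev, if_pos hi, if_neg (not_lt.2 hj)]
  omega

/-- Comparing the first and the last value shows that the two kinds of cuts exclude each other. -/
theorem not_sumCut_and_skewCut {n m m' : ℕ} {f : ℕ → ℕ} (h : SumCut n f m) (h' : SkewCut n f m') :
    False := by
  have h1 := h.2.2 0 (n - 1) h.1 (by have := h.2.1; omega) (by have := h.2.1; omega)
  have h2 := h'.2.2 0 (n - 1) h'.1 (by have := h'.2.1; omega) (by have := h'.2.1; omega)
  omega

theorem not_sumCut {t : Tree} (h : ¬ t.IsSum) (m : ℕ) : ¬ SumCut t.size t.ev m := by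
  cases t with
  | leaf => rintro ⟨h0, h1, -⟩; simp only [size] at h1; omega
  | sum a b => exact absurd trivial h
  | skew a b => exact fun hc => not_sumCut_and_skewCut hc (skewCut_skew a b)

theorem not_skewCut {t : Tree} (h : ¬ t.IsSkew) (m : ℕ) : ¬ SkewCut t.size t.ev m := by
  cases t with
  | leaf => rintro ⟨h0, h1, -⟩; simp only [size] at h1; omega
  | skew a b => exact absurd trivial h
  | sum a b => exact fun hc => not_sumCut_and_skewCut (sumCut_sum a b) hc

theorem sepPerm_ev (t : Tree) : SepPerm t.size t.ev := by
  refine ⟨ev_lt t, ?_⟩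
  induction t with
  | leaf =>
    constructor
    · intro i j hi hj; simp only [size] at hj; omega
    · intro i j k l _ _ _ hl; simp only [size] at hl; omega
    · intro i j k l _ _ _ hl; simp only [size] at hl; omega
  | sum a b iha ihb =>
    have ea := ev_lt a
    constructor
    · intro i j hi hj
      have := iha.inj i j hi
      have := ihb.inj (i - a.size) (j - a.size)
      have := ea i
      have := ea j
      simp only [ev, size] at *
      split_ifs <;> omega
    · intro i j k l hij hjk hkl hl
      have := iha.no2413 i j k l hij hjk hkl
      have := ihb.no2413 (i - a.size) (j - a.size) (k - a.size) (l - a.size)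
      have := ea i
      have := ea j
      have := ea k
      have := ea l
      simp only [ev, size] at *
      split_ifs <;> omega
    · intro i j k l hij hjk hkl hl
      have := iha.no3142 i j k l hij hjk hkl
      have := ihb.no3142 (i - a.size) (j - a.size) (k - a.size) (l - a.size)
      have := ea i
      have := ea j
      have := ea k
      have := ea l
      simp only [ev, size] at *
      split_ifs <;> omega
  | skew a b iha ihb =>
    have eb : ∀ i, a.size ≤ i → i < a.size + b.size → b.ev (i - a.size) < b.size :=
      fun i h h' => ev_lt b _ (by omega)
    constructor
    · intro i j hi hj
      have := iha.inj i j hi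
      have := ihb.inj (i - a.size) (j - a.size)
      have := eb i
      have := eb j
      simp only [ev, size] at *
      split_ifs <;> omega
    · intro i j k l hij hjk hkl hl
      have := iha.no2413 i j k l hij hjk hkl
      have := ihb.no2413 (i - a.size) (j - a.size) (k - a.size) (l - a.size)
      have := eb i
      have := eb j
      have := eb k
      have := eb l
      simp only [ev, size] at *
      split_ifs <;> omega
    · intro i j k l hij hjk hkl hl
      have := iha.no3142 i j k l hij hjk hkl
      have := ihb.no3142 (i - a.size) (j - a.size) (k - a.size) (l - a.size)
      have := eb i
      have := eb j
      have := eb k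
      have := eb l
      simp only [ev, size] at *
      split_ifs <;> omega

/-- If a separable permutation maps the interval `[a, a + b)` of positions into `[c, c + b)`, its
restriction to that interval, with positions and values shifted to start at zero, is separable. -/
theorem SepPerm.block {n : ℕ} {f : ℕ → ℕ} (hf : SepPerm n f) (a b c : ℕ) (hab : a + b ≤ n)
    (h : ∀ i, a ≤ i → i < a + b → c ≤ f i ∧ f i < c + b) : SepPerm b (fun i => f (i + a) - c) := by
  have h' : ∀ i, i < b → c ≤ f (i + a) ∧ f (i + a) < c + b :=
    fun i hi => h (i + a) (by omega) (by omega)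
  refine ⟨fun i hi => ?_, fun i j hi hj => ?_, fun i j k l hi hj hk hl => ?_,
    fun i j k l hi hj hk hl => ?_⟩
  · have := h' i hi
    omega
  · have := h' i (by omega)
    have := h' j hj
    have := hf.sep.inj (i + a) (j + a) (by omega) (by omega)
    omega
  · have := h' i (by omega)
    have := h' j (by omega)
    have := h' k (by omega)
    have := h' l hl
    have := hf.sep.no2413 (i + a) (j + a) (k + a) (l + a) (by omega) (by omega) (by omega)
      (by omega)
    omega
  · have := h' i (by omega)
    have := h' j (by omega)
    have := h' k (by omega)
    have := h' l hl
    have := hf.sep.no3142 (i + a) (j + a) (k + a) (l + a) (by omega) (by omega) (by omega)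
      (by omega)
    omega

theorem exists_tree {n : ℕ} (hn : 0 < n) {f : ℕ → ℕ} (hf : SepPerm n f) :
    ∃ t : Tree, t.Normal ∧ t.size = n ∧ ∀ i, i < n → t.ev i = f i := by
  classical
  induction n using Nat.strong_induction_on generalizing f with
  | _ n ih =>
  rcases Nat.lt_or_ge n 2 with h2 | h2
  · obtain rfl : n = 1 := by omega
    refine ⟨leaf, trivial, rfl, fun i hi => ?_⟩
    have := hf.lt i hi
    simp only [ev]
    omega
  obtain ⟨n, rfl⟩ := Nat.exists_eq_add_of_le' h2
  obtain ⟨m, hm | hm⟩ := exists_cut hf.sep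
  -- At the minimal cut, the left block has no cut, so its tree is not a sum.
  · have h : ∃ m, SumCut (n + 2) f m := ⟨m, hm⟩
    clear hm m
    have hm := Nat.find_spec h
    have hmin := fun k => @Nat.find_min _ _ h k
    generalize Nat.find h = m at *
    obtain ⟨v1, v2⟩ := sumCut_values hf hm
    obtain ⟨h0, hlt, hcut⟩ := hm
    obtain ⟨a, na, sa, ea⟩ := ih m hlt h0 (hf.block 0 m 0 (by omega)
      (fun i _ hi => ⟨by omega, by have := v1 i (by omega); omega⟩))
    obtain ⟨b, nb, sb, eb⟩ := ih (n + 2 - m) (by omega) (by omega)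
      (hf.block m (n + 2 - m) m (by omega) (fun i hi hi' =>
        ⟨v2 i hi (by omega), by have := hf.lt i (by omega); omega⟩))
    simp only [Nat.add_zero, Nat.sub_zero] at ea
    refine ⟨sum a b, ⟨fun hs => ?_, na, nb⟩, by simp only [size]; omega, fun i hi => ?_⟩
    · cases a with
      | leaf => exact hs
      | skew x y => exact hs
      | sum x y =>
        obtain ⟨c0, c1, c2⟩ := sumCut_sum x y
        refine hmin x.size (by omega) ⟨c0, by omega, fun i j hi hj hjn => ?_⟩
        by_cases hjm : j < m
        · rw [← ea i (by omega), ← ea j hjm]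
          exact c2 i j hi hj (by omega)
        · exact hcut i j (by omega) (by omega) hjn
    · simp only [ev, sa]
      split_ifs with him
      · exact ea i him
      · rw [eb (i - m) (by omega)]
        have := v2 i (by omega) hi
        rw [Nat.sub_add_cancel (by omega)]
        omega
  · have h : ∃ m, SkewCut (n + 2) f m := ⟨m, hm⟩
    clear hm m
    have hm := Nat.find_spec h
    have hmin := fun k => @Nat.find_min _ _ h k
    generalize Nat.find h = m at *
    obtain ⟨v1, v2⟩ := skewCut_values hf hm
    obtain ⟨h0, hlt, hcut⟩ := hm
    obtain ⟨a, na, sa, ea⟩ := ih m hlt h0 (hf.block 0 m (n + 2 - m) (by omega)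
      (fun i _ hi => ⟨v1 i (by omega), by have := hf.lt i (by omega); omega⟩))
    obtain ⟨b, nb, sb, eb⟩ := ih (n + 2 - m) (by omega) (by omega)
      (hf.block m (n + 2 - m) 0 (by omega) (fun i hi hi' =>
        ⟨by omega, by have := v2 i hi (by omega); omega⟩))
    simp only [Nat.add_zero, Nat.sub_zero] at ea eb
    refine ⟨skew a b, ⟨fun hs => ?_, na, nb⟩, by simp only [size]; omega, fun i hi => ?_⟩
    · cases a with
      | leaf => exact hs
      | sum x y => exact hs
      | skew x y =>
        obtain ⟨c0, c1, c2⟩ := skewCut_skew x y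
        refine hmin x.size (by omega) ⟨c0, by omega, fun i j hi hj hjn => ?_⟩
        by_cases hjm : j < m
        · have := ea i (by omega)
          have := ea j hjm
          have := c2 i j hi hj (by omega)
          omega
        · exact hcut i j (by omega) (by omega) hjn
    · simp only [ev, sa, sb]
      split_ifs with him
      · have := ea i him
        have := v1 i him
        omega
      · rw [eb (i - m) (by omega), Nat.sub_add_cancel (by omega)]

theorem tree_unique {s t : Tree} (hs : s.Normal) (ht : t.Normal) (hst : s.size = t.size)
    (h : ∀ i, i < s.size → s.ev i = t.ev i) : s = t := by
  have cutSum : ∀ {s t : Tree} (m : ℕ), s.size = t.size → (∀ i, i < s.size → s.ev i = t.ev i) →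
      SumCut s.size s.ev m → SumCut t.size t.ev m := by
    rintro s t m hst h ⟨h0, h1, h2⟩
    refine ⟨h0, by omega, fun i j hi hj hjn => ?_⟩
    rw [← h i (by omega), ← h j (by omega)]
    exact h2 i j hi hj (by omega)
  have cutSkew : ∀ {s t : Tree} (m : ℕ), s.size = t.size → (∀ i, i < s.size → s.ev i = t.ev i) →
      SkewCut s.size s.ev m → SkewCut t.size t.ev m := by
    rintro s t m hst h ⟨h0, h1, h2⟩
    refine ⟨h0, by omega, fun i j hi hj hjn => ?_⟩
    rw [← h i (by omega), ← h j (by omega)]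
    exact h2 i j hi hj (by omega)
  have restrictSum : ∀ {a b : Tree} (m : ℕ), m < a.size → SumCut (sum a b).size (sum a b).ev m →
      SumCut a.size a.ev m := by
    rintro a b m hm ⟨h0, h1, h2⟩
    refine ⟨h0, hm, fun i j hi hj hjn => ?_⟩
    have := h2 i j hi hj (by simp only [size]; omega)
    simpa only [ev, if_pos hjn, if_pos (show i < a.size by omega)] using this
  have restrictSkew : ∀ {a b : Tree} (m : ℕ), m < a.size →
      SkewCut (skew a b).size (skew a b).ev m → SkewCut a.size a.ev m := by
    rintro a b m hm ⟨h0, h1, h2⟩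
    refine ⟨h0, hm, fun i j hi hj hjn => ?_⟩
    have := h2 i j hi hj (by simp only [size]; omega)
    simpa only [ev, if_pos hjn, if_pos (show i < a.size by omega), Nat.add_lt_add_iff_left]
      using this
  induction s generalizing t with
  | leaf =>
    cases t with
    | leaf => rfl
    | sum a b => have := a.size_pos; have := b.size_pos; simp only [size] at hst; omega
    | skew a b => have := a.size_pos; have := b.size_pos; simp only [size] at hst; omega
  | sum a b iha ihb =>
    cases t with
    | leaf => have := a.size_pos; have := b.size_pos; simp only [size] at hst; omega
    | skew c d =>
      exact (not_sumCut_and_skewCut (cutSum _ hst h (sumCut_sum a b)) (skewCut_skew c d)).elim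
    | sum c d =>
      have hac : a.size = c.size := by
        rcases lt_trichotomy a.size c.size with hlt | heq | hlt
        · exact (not_sumCut ht.1 _ (restrictSum _ hlt (cutSum _ hst h (sumCut_sum a b)))).elim
        · exact heq
        · exact (not_sumCut hs.1 _ (restrictSum _ hlt (cutSum _ hst.symm
            (fun i hi => (h i (by omega)).symm) (sumCut_sum c d)))).elim
      simp only [size] at hst h
      have h1 : a = c := by
        refine iha hs.2.1 ht.2.1 hac fun i hi => ?_
        have := h i (by omega)
        simpa only [ev, if_pos hi, if_pos (hac ▸ hi)] using this
      have h2 : b = d := by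
        refine ihb hs.2.2 ht.2.2 (by omega) fun i hi => ?_
        have := h (i + a.size) (by omega)
        simpa [ev, hac] using this
      rw [h1, h2]
  | skew a b iha ihb =>
    cases t with
    | leaf => have := a.size_pos; have := b.size_pos; simp only [size] at hst; omega
    | sum c d =>
      exact (not_sumCut_and_skewCut (sumCut_sum c d) (cutSkew _ hst h (skewCut_skew a b))).elim
    | skew c d =>
      have hac : a.size = c.size := by
        rcases lt_trichotomy a.size c.size with hlt | heq | hlt
        · exact (not_skewCut ht.1 _ (restrictSkew _ hlt (cutSkew _ hst h (skewCut_skew a b)))).elim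
        · exact heq
        · exact (not_skewCut hs.1 _ (restrictSkew _ hlt (cutSkew _ hst.symm
            (fun i hi => (h i (by omega)).symm) (skewCut_skew c d)))).elim
      simp only [size] at hst h
      have hbd : b.size = d.size := by omega
      have h1 : a = c := by
        refine iha hs.2.1 ht.2.1 hac fun i hi => ?_
        have := h i (by omega)
        simp only [ev, if_pos hi, if_pos (hac ▸ hi)] at this
        omega
      have h2 : b = d := by
        refine ihb hs.2.2 ht.2.2 hbd fun i hi => ?_
        have := h (i + a.size) (by omega)
        simpa [ev, hac] using this
      rw [h1, h2]

/-! ### The statistics of a tree -/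

/-- `k` is the length of the initial ascending run of `f` on `[0, n)`. -/
def IsRun (n : ℕ) (f : ℕ → ℕ) (k : ℕ) : Prop :=
  0 < k ∧ k ≤ n ∧ (∀ i j, i < j → j < k → f i < f j) ∧ (k < n → f k < f (k - 1))

theorem isRun_skew {a b : Tree} {k : ℕ} (h : IsRun a.size a.ev k) :
    IsRun (skew a b).size (skew a b).ev k := by
  obtain ⟨h0, h1, h2, h3⟩ := h
  refine ⟨h0, by simp only [size]; omega, fun i j hi hj => ?_, fun hk => ?_⟩
  · have := h2 i j hi hj
    simp only [ev, if_pos (show i < a.size by omega), if_pos (show j < a.size by omega)]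
    omega
  · simp only [size] at hk
    by_cases hka : k < a.size
    · have := h3 hka
      simp only [ev, if_pos hka, if_pos (show k - 1 < a.size by omega)]
      omega
    · have := ev_lt b (k - a.size) (by omega)
      simp only [ev, if_neg hka, if_pos (show k - 1 < a.size by omega)]
      omega

theorem isRun_iar {t : Tree} (ht : t.Normal) : IsRun t.size t.ev t.iar := by
  fun_induction Tree.iar t with
  | case1 =>
    refine ⟨by omega, by simp [size], fun i j hi hj => by omega, fun h => ?_⟩
    simp only [size] at h
    omega
  | case2 b ih =>
    obtain ⟨h0, h1, h2, h3⟩ := ih ht.2.2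
    have hev : ∀ i, (sum leaf b).ev i = if i < 1 then i else 1 + b.ev (i - 1) := fun i => rfl
    refine ⟨by omega, by simp only [size]; omega, fun i j hi hj => ?_, fun hk => ?_⟩
    · have := h2 (i - 1) (j - 1)
      rw [hev, hev]
      split_ifs <;> omega
    · simp only [size] at hk
      have := h3 (by omega)
      rw [hev, hev, if_neg (by omega), if_neg (by omega)]
      rw [show 1 + b.iar - 1 - 1 = b.iar - 1 by omega, show 1 + b.iar - 1 = b.iar by omega]
      omega
  | case3 a c b ih => exact absurd trivial ht.1
  | case4 a c b ih =>
    obtain ⟨h0, h1, h2, h3⟩ := ih ht.2.1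
    -- The first and last values of a skew sum are in decreasing order, so the run is proper.
    have hlt : (skew a c).iar < (skew a c).size := by
      refine lt_of_le_of_ne h1 fun heq => ?_
      obtain ⟨g0, g1, g2⟩ := skewCut_skew a c
      have e1 := g2 0 ((skew a c).size - 1) g0 (by omega) (by omega)
      have e2 := h2 0 ((skew a c).size - 1) (by omega) (by omega)
      omega
    have hev : ∀ i, i < (skew a c).size → (sum (skew a c) b).ev i = (skew a c).ev i :=
      fun i hi => by rw [Tree.ev, if_pos hi]
    have hsz : (sum (skew a c) b).size = (skew a c).size + b.size := rfl
    refine ⟨h0, by omega, fun i j hi hj => ?_, fun _ => ?_⟩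
    · rw [hev i (by omega), hev j (by omega)]
      exact h2 i j hi hj
    · rw [hev _ hlt, hev _ (by omega)]
      exact h3 hlt
  | case5 a b ih => exact isRun_skew (ih ht.2.1)

/-- The positions in `[1, n]` at which a sum-component of `f` on `[0, n)` ends. -/
def compSet (n : ℕ) (f : ℕ → ℕ) : Finset ℕ :=
  (Finset.Icc 1 n).filter (fun k => ∀ i < k, f i < k)

/-- A position before `n` ending a component of a permutation is a cut. -/
theorem sumCut_of_prefix {n k : ℕ} {f : ℕ → ℕ} (hf : SepPerm n f) (h0 : 0 < k) (hk : k < n)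
    (h : ∀ i < k, f i < k) : SumCut n f k := by
  refine ⟨h0, hk, fun i j hi hj hjn => (h i hi).trans_le ?_⟩
  -- Otherwise the `k + 1` positions `0, …, k - 1, j` would all have values below `k`.
  by_contra hc
  have := Finset.card_le_card_of_injOn (s := insert j (Finset.range k)) (t := Finset.range k) f
    (fun x hx => by
      simp only [Finset.coe_insert, Finset.coe_range, Set.mem_insert_iff, Set.mem_Iio] at hx ⊢
      rcases hx with rfl | hx
      · omega
      · exact h x hx)
    (hf.sep.injOn (fun x hx => by
      simp only [Finset.coe_insert, Finset.coe_range, Set.mem_insert_iff, Set.mem_Iio] at hx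
      omega))
  rw [Finset.card_insert_of_notMem (by simp; omega)] at this
  simp at this

theorem compSet_of_not_isSum {t : Tree} (ht : ¬ t.IsSum) : compSet t.size t.ev = {t.size} := by
  ext k
  simp only [compSet, Finset.mem_filter, Finset.mem_Icc, Finset.mem_singleton]
  constructor
  · rintro ⟨⟨h0, h1⟩, h2⟩
    by_contra hne
    exact not_sumCut ht k (sumCut_of_prefix (sepPerm_ev t) h0 (by omega) h2)
  · rintro rfl
    exact ⟨⟨t.size_pos, le_rfl⟩, ev_lt t⟩

theorem compSet_sum {a b : Tree} (ha : ¬ a.IsSum) : compSet (sum a b).size (sum a b).ev =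
    insert a.size ((compSet b.size b.ev).image (fun k => a.size + k)) := by
  have hpos := a.size_pos
  ext k
  simp only [Finset.mem_insert, Finset.mem_image]
  by_cases hk : k ≤ a.size
  · have h1 : k ∈ compSet (sum a b).size (sum a b).ev ↔ k ∈ compSet a.size a.ev := by
      simp only [compSet, Finset.mem_filter, Finset.mem_Icc, size]
      refine and_congr (by omega) (forall₂_congr fun i hi => ?_)
      rw [ev, if_pos (by omega)]
    rw [h1, compSet_of_not_isSum ha, Finset.mem_singleton]
    refine ⟨Or.inl, ?_⟩
    rintro (h | ⟨x, hx, rfl⟩)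
    · exact h
    · simp only [compSet, Finset.mem_filter, Finset.mem_Icc] at hx
      omega
  · obtain ⟨x, rfl⟩ := Nat.exists_eq_add_of_le (not_le.1 hk).le
    simp only [Nat.add_left_cancel_iff, exists_eq_right]
    simp only [compSet, Finset.mem_filter, Finset.mem_Icc, size]
    constructor
    · rintro ⟨h1, h2⟩
      refine Or.inr ⟨by omega, fun i hi => ?_⟩
      have := h2 (a.size + i) (by omega)
      simpa [ev] using this
    · rintro (h | ⟨h1, h2⟩)
      · omega
      · refine ⟨by omega, fun i hi => ?_⟩
        have e1 := ev_lt a i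
        have e2 := h2 (i - a.size)
        simp only [ev]
        split_ifs <;> omega

theorem card_compSet {t : Tree} (ht : t.Normal) : (compSet t.size t.ev).card = t.comp := by
  induction t with
  | leaf => rw [compSet_of_not_isSum (by simp [IsSum])]; rfl
  | skew a b => rw [compSet_of_not_isSum (by simp [IsSum])]; rfl
  | sum a b iha ihb =>
    rw [compSet_sum ht.1, Finset.card_insert_of_notMem, Finset.card_image_of_injective, ihb ht.2.2,
      Tree.comp, Nat.add_comm]
    · exact fun x y h => by simpa using h
    · simp only [Finset.mem_image, compSet, Finset.mem_filter, Finset.mem_Icc]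
      rintro ⟨x, hx, hx'⟩
      omega

/-! ### Transfer to permutations of `Fin n` -/

/-- Extension of a permutation of `Fin n` to a function on `ℕ` (the identity outside `[0, n)`). -/
def toFun {n : ℕ} (π : Equiv.Perm (Fin n)) (i : ℕ) : ℕ := if h : i < n then π ⟨i, h⟩ else i

theorem toFun_of_lt {n : ℕ} (π : Equiv.Perm (Fin n)) {i : ℕ} (h : i < n) :
    toFun π i = π ⟨i, h⟩ := dif_pos h

theorem toFun_coe {n : ℕ} (π : Equiv.Perm (Fin n)) (i : Fin n) : toFun π i = π i :=
  toFun_of_lt π i.2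

theorem containsPat_iff {n : ℕ} (π : Equiv.Perm (Fin n)) (σ : Equiv.Perm (Fin 4)) :
    ContainsPat π σ ↔ ∃ g : Fin 4 → ℕ, StrictMono g ∧ g 3 < n ∧
      ∀ a b, σ a < σ b ↔ toFun π (g a) < toFun π (g b) := by
  constructor
  · rintro ⟨f, hf⟩
    refine ⟨fun a => f a, fun a b h => f.strictMono h, (f 3).2, fun a b => ?_⟩
    rw [hf a b, toFun_coe, toFun_coe, Fin.lt_def]
  · rintro ⟨g, hg, h3, h⟩
    have hlt : ∀ a, g a < n := fun a => (hg.monotone (Fin.le_last a)).trans_lt h3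
    refine ⟨OrderEmbedding.ofStrictMono (fun a => ⟨g a, hlt a⟩) (fun a b hab => hg hab),
      fun a b => ?_⟩
    rw [h a b, toFun_of_lt π (hlt a), toFun_of_lt π (hlt b), Fin.lt_def]
    rfl

theorem strictMono_quad {i j k l : ℕ} (hij : i < j) (hjk : j < k) (hkl : k < l) :
    StrictMono ![i, j, k, l] := by
  intro a b hab
  fin_cases a <;> fin_cases b <;> simp at hab ⊢ <;> omega

theorem separable_iff {n : ℕ} (π : Equiv.Perm (Fin n)) : Separable π ↔ SepPerm n (toFun π) := by
  constructor
  · rintro ⟨h1, h2⟩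
    rw [containsPat_iff] at h1 h2
    refine ⟨fun i hi => ?_, fun i j hi hj he => ?_, fun i j k l hij hjk hkl hl ⟨e1, e2, e3⟩ => h1 ?_,
      fun i j k l hij hjk hkl hl ⟨e1, e2, e3⟩ => h2 ?_⟩
    · rw [toFun_of_lt π hi]; exact (π _).2
    · rw [toFun_of_lt π (hi.trans hj), toFun_of_lt π hj, ← Fin.ext_iff] at he
      have := congrArg Fin.val (π.injective he)
      dsimp only at this
      omega
    · refine ⟨![i, j, k, l], strictMono_quad hij hjk hkl, hl, fun a b => ?_⟩
      fin_cases a <;> fin_cases b <;> simp [pattern2413] <;> omega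
    · refine ⟨![i, j, k, l], strictMono_quad hij hjk hkl, hl, fun a b => ?_⟩
      fin_cases a <;> fin_cases b <;> simp [pattern3142] <;> omega
  · rintro ⟨h0, h1, h2, h3⟩
    constructor
    · rw [containsPat_iff]
      rintro ⟨g, hg, hn, h⟩
      exact h2 (g 0) (g 1) (g 2) (g 3) (hg (by decide)) (hg (by decide)) (hg (by decide)) hn
        ⟨(h 2 0).1 (by decide), (h 0 3).1 (by decide), (h 3 1).1 (by decide)⟩
    · rw [containsPat_iff]
      rintro ⟨g, hg, hn, h⟩
      exact h3 (g 0) (g 1) (g 2) (g 3) (hg (by decide)) (hg (by decide)) (hg (by decide)) hn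
        ⟨(h 1 3).1 (by decide), (h 3 0).1 (by decide), (h 0 2).1 (by decide)⟩

theorem iar_eq {n k : ℕ} {π : Equiv.Perm (Fin n)} (h : IsRun n (toFun π) k) : _root_.iar π = k := by
  obtain ⟨h0, h1, h2, h3⟩ := h
  rw [_root_.iar, Nat.findGreatest_eq_iff]
  refine ⟨h1, fun _ i j hij hj => ?_, fun m hm hmn hc => ?_⟩
  · have := h2 i j hij hj
    rwa [toFun_coe, toFun_coe] at this
  · have e1 := hc ⟨k - 1, by omega⟩ ⟨k, by omega⟩ (by dsimp only; omega) hm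
    have e2 := h3 (by omega)
    rw [toFun_of_lt π (show k < n by omega), toFun_of_lt π (show k - 1 < n by omega)] at e2
    rw [Fin.lt_def] at e1
    omega

theorem compStat_eq {n : ℕ} (π : Equiv.Perm (Fin n)) :
    compStat π = (compSet n (toFun π)).card := by
  rw [compStat, compSet]
  congr 1
  refine Finset.filter_congr fun k hk => ?_
  have hkn := (Finset.mem_Icc.1 hk).2
  constructor
  · intro h i hi
    rw [toFun_of_lt π (by omega)]
    exact h _ hi
  · intro h i hi
    have := h i hi
    rwa [toFun_coe] at this

/-- Normal trees with `n` leaves. -/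
abbrev NTree (n : ℕ) : Type := {t : Tree // t.Normal ∧ t.size = n}

/-- The permutation of `Fin n` encoded by a tree with `n` leaves. -/
noncomputable def toPerm {n : ℕ} (t : NTree n) : Equiv.Perm (Fin n) :=
  Equiv.ofBijective (fun i => ⟨t.1.ev i, by have := ev_lt t.1 i; have := t.2.2; omega⟩) <| by
    rw [← Finite.injective_iff_bijective]
    intro i j h
    rw [Fin.mk.injEq] at h
    exact Fin.ext ((sepPerm_ev t.1).sep.injOn (s := {x | x < n})
      (fun x hx => by rw [t.2.2]; exact hx) i.2 j.2 h)

theorem toFun_toPerm {n : ℕ} (t : NTree n) {i : ℕ} (hi : i < n) :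
    toFun (toPerm t) i = t.1.ev i := by
  rw [toFun_of_lt _ hi]; rfl

theorem separable_toPerm {n : ℕ} (t : NTree n) : Separable (toPerm t) := by
  rw [separable_iff]
  have h := sepPerm_ev t.1
  rw [t.2.2] at h
  have e : ∀ i, i < n → toFun (toPerm t) i = t.1.ev i := fun i => toFun_toPerm t
  refine ⟨fun i hi => ?_, fun i j hi hj => ?_, fun i j k l hi hj hk hl => ?_,
    fun i j k l hi hj hk hl => ?_⟩
  · rw [e i hi]; exact h.lt i hi
  · rw [e i (by omega), e j hj]; exact h.sep.inj i j hi hj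
  · rw [e i (by omega), e j (by omega), e k (by omega), e l hl]
    exact h.sep.no2413 i j k l hi hj hk hl
  · rw [e i (by omega), e j (by omega), e k (by omega), e l hl]
    exact h.sep.no3142 i j k l hi hj hk hl

theorem iar_toPerm {n : ℕ} (t : NTree n) : _root_.iar (toPerm t) = t.1.iar := by
  apply iar_eq
  obtain ⟨h0, h1, h2, h3⟩ := isRun_iar t.2.1
  rw [t.2.2] at h1 h3
  refine ⟨h0, h1, fun i j hi hj => ?_, fun hk => ?_⟩
  · rw [toFun_toPerm t (by omega), toFun_toPerm t (by omega)]
    exact h2 i j hi hj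
  · rw [toFun_toPerm t hk, toFun_toPerm t (by omega)]
    exact h3 hk

theorem compStat_toPerm {n : ℕ} (t : NTree n) : compStat (toPerm t) = t.1.comp := by
  rw [compStat_eq, ← card_compSet t.2.1, t.2.2]
  congr 1
  refine Finset.filter_congr fun k hk => forall₂_congr fun i hi => ?_
  rw [toFun_toPerm t (by have := (Finset.mem_Icc.1 hk).2; omega)]

/-- Normal trees with `n` leaves are in bijection with separable permutations. -/
noncomputable def treeEquiv {n : ℕ} (hn : 0 < n) :
    NTree n ≃ {π : Equiv.Perm (Fin n) // Separable π} :=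
  Equiv.ofBijective (fun t => ⟨toPerm t, separable_toPerm t⟩) <| by
    constructor
    · intro s t h
      rw [Subtype.mk.injEq] at h
      refine Subtype.ext (tree_unique s.2.1 t.2.1 (s.2.2.trans t.2.2.symm) fun i hi => ?_)
      rw [s.2.2] at hi
      rw [← toFun_toPerm s hi, ← toFun_toPerm t hi, h]
    · rintro ⟨π, hπ⟩
      obtain ⟨t, h1, h2, h3⟩ := exists_tree hn ((separable_iff π).1 hπ)
      refine ⟨⟨t, h1, h2⟩, Subtype.ext (Equiv.ext fun i => Fin.ext ?_)⟩
      rw [← toFun_coe, ← toFun_coe]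
      exact (toFun_toPerm ⟨t, h1, h2⟩ i.2).trans (h3 i i.2)

/-- `Tree.phi` on the finite set of normal trees with `n` leaves. -/
noncomputable def phiEquiv {n : ℕ} (hn : 0 < n) : NTree n ≃ NTree n :=
  haveI : Finite (NTree n) := Finite.of_equiv _ (treeEquiv hn).symm
  Equiv.ofBijective
    (fun t => ⟨t.1.phi, normal_phi t.2.1, (size_phi t.1).trans t.2.2⟩) <| by
      rw [← Finite.injective_iff_bijective]
      intro s t h
      rw [Subtype.mk.injEq] at h
      exact Subtype.ext (phi_inj s.2.1 t.2.1 h)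

end SepTree

open SepTree in
/-- For every `n ≥ 1` and `1 ≤ k ≤ n`, the statistics `iar` and `comp` are
equidistributed on separable permutations of `[n]`. -/
theorem stmt16 (n k : ℕ) (hn : 1 ≤ n) (hk : 1 ≤ k) (hkn : k ≤ n) :
    Nat.card {π : Equiv.Perm (Fin n) // Separable π ∧ iar π = k} =
      Nat.card {π : Equiv.Perm (Fin n) // Separable π ∧ compStat π = k} := by
  have e : {π : {π : Equiv.Perm (Fin n) // Separable π} // iar π.1 = k} ≃
      {π : {π : Equiv.Perm (Fin n) // Separable π} // compStat π.1 = k} := by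
    refine Equiv.subtypeEquiv (((treeEquiv hn).symm.trans (phiEquiv hn)).trans (treeEquiv hn))
      fun π => ?_
    obtain ⟨t, rfl⟩ := (treeEquiv hn).surjective π
    have h1 : iar ((treeEquiv hn) t).1 = t.1.iar := iar_toPerm t
    have h2 : compStat ((treeEquiv hn) (phiEquiv hn t)).1 = t.1.phi.comp :=
      compStat_toPerm (phiEquiv hn t)
    simp only [Equiv.trans_apply, Equiv.symm_apply_apply]
    rw [h1, h2, Tree.comp_phi]
  exact Nat.card_congr ((Equiv.subtypeSubtypeEquivSubtypeInter Separable (fun π => iar π = k)).symm.trans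
    (e.trans (Equiv.subtypeSubtypeEquivSubtypeInter Separable (fun π => compStat π = k))))
end

section
/- For all integers n ≥ 0 and 1 ≤ k ≤ n+1, the number of separable permutations π of [n+1] with comp(π) = k equals the number of Schröder paths of semilength n with exactly k−1 horizontal steps at height 0. -/
/-!
Both sides are computed by generating functions in `x`, and the resulting equations are compared.

*Permutations.* Let `S` be the series of nonempty separable permutations, `I` that of the
sum-indecomposable ones (`comp = 1`), and `A k` that of those with `k + 1` components. Splitting off
the first component (`SepPerm.cnt_eq_sum`) gives `A 0 = I`, `A (k + 1) = I * A k` and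
`S = I + I * S`. A separable permutation of length at least `2` is either sum-decomposable or
skew-decomposable, and not both (`SepPerm.exists_cut`, `SepPerm.compStat_rev`); complementing the
values exchanges the two cases, so indecomposable and decomposable ones are equinumerous
(`SepPerm.cnt_rev`), that is, `I = x + I * S`. Hence `I * (1 - S) = x` and `S = x + x * S + S ^ 2`.

*Paths.* Schröder words are in bijection with the trees `STree`, which record the decomposition of a
path as empty, `H p` or `U q D p`. With `R` the series of all paths and `B k` that of the paths
with `k` horizontal steps at height `0`, this gives (`STree.cnt_succ`) `R = 1 + x * R + x * R ^ 2`,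
`B 0 = 1 + x * R * B 0` and `B (k + 1) = x * B k + x * R * B (k + 1)`.

Thus `S` and `x * R` satisfy the same quadratic equation and agree (`series_unique`). Then
`x * B 0 * (1 - S) = x` and `x * B (k + 1) * (1 - S) = x * (x * B k)`, whence `A k = x * B k` by
induction on `k` (`series_eq`), cancelling `1 - S`. Comparing coefficients of `x ^ (n + 1)` gives
the theorem.
-/

/-- A step of a Schröder path: up `(1,1)`, down `(1,-1)`, or horizontal `(2,0)`. -/
inductive SStep : Type
  | U | D | H
  deriving DecidableEq

/-- `IsSchroeder n w` : `w` is a Schröder path of semilength `n`. -/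
def IsSchroeder (n : ℕ) (w : List SStep) : Prop :=
  w.count SStep.U = w.count SStep.D ∧
  w.count SStep.U + w.count SStep.H = n ∧
  ∀ i : ℕ, (w.take i).count SStep.D ≤ (w.take i).count SStep.U

/-- The number of hills: occurrences of the factor `UD` starting at height `0`. -/
def hills (w : List SStep) : ℕ :=
  ((Finset.range w.length).filter (fun i =>
    w[i]? = some SStep.U ∧ w[i+1]? = some SStep.D ∧
    (w.take i).count SStep.U = (w.take i).count SStep.D)).card

/-- The number of horizontal steps at height `0`. -/
def h0 (w : List SStep) : ℕ :=
  ((Finset.range w.length).filter (fun i =>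
    w[i]? = some SStep.H ∧
    (w.take i).count SStep.U = (w.take i).count SStep.D)).card

/-- The number of horizontal steps at positive height. -/
def hpos (w : List SStep) : ℕ :=
  ((Finset.range w.length).filter (fun i =>
    w[i]? = some SStep.H ∧
    (w.take i).count SStep.D < (w.take i).count SStep.U)).card

/-- `r n k` : the number of Schröder paths of semilength `n` with exactly `k` hills. -/
noncomputable def r (n k : ℕ) : ℕ :=
  Nat.card {w : List SStep // IsSchroeder n w ∧ hills w = k}

/-- A little Schröder path: a Schröder path with no horizontal step at height `0`. -/
def IsLittle (n : ℕ) (w : List SStep) : Prop :=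
  IsSchroeder n w ∧ h0 w = 0

/-- `s n k` : the number of little Schröder paths of semilength `n` with exactly `k` hills. -/
noncomputable def s (n k : ℕ) : ℕ :=
  Nat.card {w : List SStep // IsLittle n w ∧ hills w = k}

/-! ### Schröder paths as trees -/

/-- Encoding of the recursive structure of Schröder paths: the empty path, a horizontal step
followed by a path, or an elevated path `U a D` followed by a path `b`. -/
inductive STree : Type
  | nil : STree
  | hor : STree → STree
  | ud : STree → STree → STree

namespace STree

/-- The path encoded by a tree. -/
def word : STree → List SStep
  | nil => []
  | hor t => SStep.H :: t.word
  | ud a b => SStep.U :: (a.word ++ SStep.D :: b.word)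

/-- The semilength of the encoded path. -/
def size : STree → ℕ
  | nil => 0
  | hor t => t.size + 1
  | ud a b => a.size + b.size + 1

/-- The number of horizontal steps at height `0` of the encoded path. -/
def flat : STree → ℕ
  | nil => 0
  | hor t => t.flat + 1
  | ud _ b => b.flat

theorem count_U_eq (t : STree) : t.word.count SStep.U = t.word.count SStep.D := by
  induction t with
  | nil => simp [word]
  | hor t ih => simpa [word] using ih
  | ud a b iha ihb => simp [word]; omega

theorem size_eq (t : STree) : t.word.count SStep.U + t.word.count SStep.H = t.size := by
  induction t with
  | nil => simp [word, size]
  | hor t ih => simp [word, size]; omega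
  | ud a b iha ihb => simp [word, size]; omega

theorem length_le (t : STree) : t.word.length ≤ 2 * t.size := by
  induction t with
  | nil => simp [word, size]
  | hor t ih => simp [word, size]; omega
  | ud a b iha ihb => simp [word, size]; omega

theorem prefix_le (t : STree) :
    ∀ i : ℕ, (t.word.take i).count SStep.D ≤ (t.word.take i).count SStep.U := by
  induction t with
  | nil => simp [word]
  | hor t ih =>
    intro i
    cases i with
    | zero => simp
    | succ i => simpa [word] using ih i
  | ud a b iha ihb =>
    intro i
    cases i with
    | zero => simp
    | succ i =>
      simp only [word, List.take_succ_cons, List.take_append, List.count_cons, List.count_append]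
      rcases Nat.lt_or_ge a.word.length i with h | h
      · obtain ⟨k, hk⟩ : ∃ k, i - a.word.length = k + 1 := ⟨i - a.word.length - 1, by omega⟩
        have h1 := ihb k
        have h2 := count_U_eq a
        rw [hk, List.take_succ_cons, List.take_of_length_le h.le]
        simp
        omega
      · have h1 := iha i
        rw [Nat.sub_eq_zero_of_le h]
        simp
        omega

theorem isSchroeder (t : STree) : IsSchroeder t.size t.word :=
  ⟨t.count_U_eq, t.size_eq, t.prefix_le⟩

/-- Unique readability: a tree can be recovered from its word even when the word is followed by
a remainder that is empty or starts with a down step. -/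
theorem word_append_inj (t : STree) : ∀ (t' : STree) (r r' : List SStep),
    (r = [] ∨ ∃ q, r = SStep.D :: q) → (r' = [] ∨ ∃ q, r' = SStep.D :: q) →
    t.word ++ r = t'.word ++ r' → t = t' ∧ r = r' := by
  induction t with
  | nil =>
    rintro (_ | t' | ⟨a', b'⟩) r r' hr hr' h
    · exact ⟨rfl, by simpa [word] using h⟩
    · rcases hr with rfl | ⟨q, rfl⟩ <;> simp [word] at h
    · rcases hr with rfl | ⟨q, rfl⟩ <;> simp [word] at h
  | hor t ih =>
    rintro (_ | t' | ⟨a', b'⟩) r r' hr hr' h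
    · rcases hr' with rfl | ⟨q, rfl⟩ <;> simp [word] at h
    · obtain ⟨h1, h2⟩ := ih t' r r' hr hr' (by simpa [word] using h)
      exact ⟨by rw [h1], h2⟩
    · simp [word] at h
  | ud a b iha ihb =>
    rintro (_ | t' | ⟨a', b'⟩) r r' hr hr' h
    · rcases hr' with rfl | ⟨q, rfl⟩ <;> simp [word] at h
    · simp [word] at h
    · obtain ⟨h1, h2⟩ := iha a' (SStep.D :: (b.word ++ r)) (SStep.D :: (b'.word ++ r'))
        (Or.inr ⟨_, rfl⟩) (Or.inr ⟨_, rfl⟩) (by simpa [word] using h)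
      obtain ⟨h3, h4⟩ := ihb b' r r' hr hr' (by simpa using h2)
      exact ⟨by rw [h1, h3], h4⟩

theorem word_injective : Function.Injective word := fun t t' h =>
  (word_append_inj t t' [] [] (Or.inl rfl) (Or.inl rfl) (by simpa using h)).1

/-- A word all of whose suffixes have at least as many `D`s as `U`s starts with the word of a
tree, followed by nothing or by a down step. -/
theorem exists_parse (N : ℕ) : ∀ w : List SStep, w.length ≤ N →
    (∀ i, (w.drop i).count SStep.U ≤ (w.drop i).count SStep.D) →
    ∃ (t : STree) (r : List SStep), w = t.word ++ r ∧ (r = [] ∨ ∃ q, r = SStep.D :: q) := by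
  induction N with
  | zero =>
    intro w hw _
    exact ⟨nil, [], by simpa [word] using hw, Or.inl rfl⟩
  | succ N ih =>
    intro w hw hs
    match w, hw, hs with
    | [], _, _ => exact ⟨nil, [], rfl, Or.inl rfl⟩
    | SStep.D :: q, _, _ => exact ⟨nil, SStep.D :: q, rfl, Or.inr ⟨q, rfl⟩⟩
    | SStep.H :: q, hw, hs =>
      obtain ⟨t, r, h, hr⟩ := ih q (by simpa using hw) (fun i => by simpa using hs (i + 1))
      exact ⟨hor t, r, by simp [word, h], hr⟩
    | SStep.U :: q, hw, hs =>
      have hq : ∀ i, (q.drop i).count SStep.U ≤ (q.drop i).count SStep.D :=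
        fun i => by simpa using hs (i + 1)
      obtain ⟨a, r, h, hr⟩ := ih q (by simpa using hw) hq
      rcases hr with rfl | ⟨q', rfl⟩
      · have h0 := hs 0
        have h1 := a.count_U_eq
        simp [h] at h0
        omega
      · obtain ⟨b, r', h', hr'⟩ := ih q' (by simp [h] at hw; omega) (fun i => by
          have := hq (a.word.length + 1 + i)
          rw [h, add_assoc, List.drop_append] at this
          rw [List.drop_of_length_le (by omega)] at this
          simpa [add_comm 1 i] using this)
        exact ⟨ud a b, r', by simp [word, h, h'], hr'⟩

theorem exists_word {n : ℕ} {w : List SStep} (hw : IsSchroeder n w) : ∃ t : STree, t.word = w := by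
  obtain ⟨h1, h2, h3⟩ := hw
  obtain ⟨t, r, h, hr⟩ := exists_parse w.length w le_rfl (fun i => by
    have e := h3 i
    have eU : (w.take i).count SStep.U + (w.drop i).count SStep.U = w.count SStep.U := by
      rw [← List.count_append, List.take_append_drop]
    have eD : (w.take i).count SStep.D + (w.drop i).count SStep.D = w.count SStep.D := by
      rw [← List.count_append, List.take_append_drop]
    omega)
  rcases hr with rfl | ⟨q, rfl⟩
  · exact ⟨t, by simpa using h.symm⟩
  · -- a down step after a balanced prefix would go below the axis
    have e := h3 (t.word.length + 1)
    have := t.count_U_eq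
    rw [h, List.take_append, List.take_of_length_le (by omega)] at e
    simp at e
    omega

/-- The number of horizontal steps of `w` at height `0` when `w` starts at height `z`. -/
def flatFrom (z : ℤ) : List SStep → ℕ
  | [] => 0
  | SStep.U :: w => flatFrom (z + 1) w
  | SStep.D :: w => flatFrom (z - 1) w
  | SStep.H :: w => (if z = 0 then 1 else 0) + flatFrom z w

theorem flatFrom_eq (w : List SStep) : ∀ z : ℤ, ((Finset.range w.length).filter (fun i =>
    w[i]? = some SStep.H ∧
    z + (w.take i).count SStep.U = (w.take i).count SStep.D)).card = flatFrom z w := by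
  induction w with
  | nil => simp [flatFrom]
  | cons s w ih =>
    intro z
    rw [Finset.card_filter, List.length_cons, Finset.sum_range_succ']
    cases s with
    | U =>
      rw [flatFrom, ← ih, Finset.card_filter]
      simp [add_right_comm, ← add_assoc]
    | D =>
      rw [flatFrom, ← ih, Finset.card_filter]
      simp [sub_add_eq_add_sub, sub_eq_iff_eq_add]
    | H =>
      rw [flatFrom, ← ih, Finset.card_filter]
      simp [add_comm]

theorem h0_eq_flatFrom (w : List SStep) : h0 w = flatFrom 0 w := by
  rw [← flatFrom_eq, h0]
  congr 1
  ext i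
  simp

theorem flatFrom_word (t : STree) : ∀ (z : ℤ) (r : List SStep), 0 ≤ z →
    flatFrom z (t.word ++ r) = (if z = 0 then t.flat else 0) + flatFrom z r := by
  induction t with
  | nil => intro z r _; simp [word, flat]
  | hor t ih =>
    intro z r hz
    simp only [word, List.cons_append, flatFrom, ih z r hz, flat]
    split_ifs <;> omega
  | ud a b iha ihb =>
    intro z r hz
    simp only [word, List.cons_append, List.append_assoc, flatFrom, flat]
    rw [iha _ _ (by omega), if_neg (by omega), flatFrom]
    simp [ihb z r hz]

theorem h0_word (t : STree) : h0 t.word = t.flat := by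
  have := flatFrom_word t 0 [] le_rfl
  simpa [h0_eq_flatFrom, flatFrom] using this

instance : Finite SStep :=
  Finite.of_injective (fun s : SStep => (decide (s = SStep.U), decide (s = SStep.D)))
    (by intro a b; cases a <;> cases b <;> simp)

/-- The number of trees of size `n` with a given property. -/
noncomputable def cnt (n : ℕ) (P : STree → Prop) : ℕ := Nat.card {t : STree // t.size = n ∧ P t}

instance finite_size (n : ℕ) (P : STree → Prop) : Finite {t : STree // t.size = n ∧ P t} := by
  have := (List.finite_length_le SStep (2 * n)).to_subtype
  refine Finite.of_injective (β := {l : List SStep | l.length ≤ 2 * n})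
    (fun t => ⟨t.1.word, by have := t.1.length_le; rw [t.2.1] at this; exact this⟩) ?_
  intro a b h
  exact Subtype.ext (word_injective (congrArg Subtype.val h))

theorem card_schroeder (n k : ℕ) :
    Nat.card {w : List SStep // IsSchroeder n w ∧ h0 w = k} = cnt n (fun t => t.flat = k) := by
  symm
  refine Nat.card_congr (Equiv.ofBijective (fun t => ⟨t.1.word, ?_, ?_⟩) ⟨?_, ?_⟩)
  · have := t.1.isSchroeder; rwa [t.2.1] at this
  · rw [h0_word, t.2.2]
  · intro a b h
    exact Subtype.ext (word_injective (congrArg Subtype.val h))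
  · rintro ⟨w, hw, hk⟩
    obtain ⟨t, rfl⟩ := exists_word hw
    exact ⟨⟨t, by rw [← t.size_eq, hw.2.1], by simpa only [h0_word] using hk⟩, rfl⟩

theorem cnt_zero (P : STree → Prop) [Decidable (P nil)] : cnt 0 P = if P nil then 1 else 0 := by
  have hn : ∀ t : STree, t.size = 0 → t = nil := by
    intro t; cases t <;> simp [size]
  split_ifs with h
  · have : Unique {t : STree // t.size = 0 ∧ P t} :=
      ⟨⟨⟨nil, rfl, h⟩⟩, fun t => Subtype.ext (hn _ t.2.1)⟩
    exact Nat.card_unique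
  · have : IsEmpty {t : STree // t.size = 0 ∧ P t} :=
      ⟨fun t => h (hn _ t.2.1 ▸ t.2.2)⟩
    exact Nat.card_of_isEmpty

/-- The first-step decomposition of Schröder paths. -/
theorem cnt_succ (n : ℕ) (P : STree → Prop) (hP : ∀ a b, P (ud a b) ↔ P b) :
    cnt (n + 1) P = cnt n (fun t => P (hor t)) +
      ∑ p ∈ Finset.HasAntidiagonal.antidiagonal n, cnt p.1 (fun _ => True) * cnt p.2 P := by
  let F : {t : STree // t.size = n ∧ P (hor t)} ⊕
      (Σ p : Finset.HasAntidiagonal.antidiagonal n,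
        {t : STree // t.size = p.1.1 ∧ True} × {t : STree // t.size = p.1.2 ∧ P t}) →
      {t : STree // t.size = n + 1 ∧ P t} := fun x => match x with
    | Sum.inl t => ⟨hor t.1, by simp [size, t.2.1], t.2.2⟩
    | Sum.inr ⟨p, a, b⟩ => ⟨ud a.1 b.1, by
        have := Finset.HasAntidiagonal.mem_antidiagonal.1 p.2
        simp [size, a.2.1, b.2.1, this], (hP _ _).2 b.2.2⟩
  have hF : Function.Bijective F := by
    constructor
    · rintro (⟨t, ht⟩ | ⟨⟨⟨i, j⟩, hp⟩, ⟨a, ha⟩, ⟨b, hb⟩⟩)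
        (⟨t', ht'⟩ | ⟨⟨⟨i', j'⟩, hp'⟩, ⟨a', ha'⟩, ⟨b', hb'⟩⟩) h
      · have h := congrArg Subtype.val h
        simp only [F, hor.injEq] at h
        subst h; rfl
      · have h := congrArg Subtype.val h
        simp [F] at h
      · have h := congrArg Subtype.val h
        simp [F] at h
      · have h := congrArg Subtype.val h
        simp only [F, ud.injEq] at h
        obtain ⟨rfl, rfl⟩ := h
        obtain rfl : i = i' := ha.1.symm.trans ha'.1
        obtain rfl : j = j' := hb.1.symm.trans hb'.1
        rfl
    · rintro ⟨_ | t | ⟨a, b⟩, ht, hPt⟩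
      · simp [size] at ht
      · exact ⟨Sum.inl ⟨t, by simpa [size] using ht, hPt⟩, rfl⟩
      · exact ⟨Sum.inr ⟨⟨(a.size, b.size), by simpa [size] using ht⟩, ⟨a, rfl, trivial⟩,
          ⟨b, rfl, (hP _ _).1 hPt⟩⟩, rfl⟩
  rw [cnt, ← Nat.card_congr (Equiv.ofBijective F hF), Nat.card_sum, Nat.card_sigma]
  simp only [Nat.card_prod]
  congr 1
  exact Finset.sum_coe_sort (Finset.HasAntidiagonal.antidiagonal n)
    (fun p => cnt p.1 (fun _ => True) * cnt p.2 P)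

end STree

/-! ### Cuts of separable permutations -/

namespace SepPerm

/-- If the first `n` terms of `f` have an increasing cut and the first `n + 1` terms avoid `3142`,
then the first `n + 1` terms have an increasing or a decreasing cut. -/
theorem cut_step (f : ℕ → ℤ) (n : ℕ) (hinj : ∀ a < n, f a ≠ f n)
    (h3142 : ∀ a b c d, a < b → b < c → c < d → d < n + 1 →
      ¬ (f b < f d ∧ f d < f a ∧ f a < f c))
    (hcut : ∃ m, 0 < m ∧ m < n ∧ ∀ a b, a < m → m ≤ b → b < n → f a < f b) :
    (∃ m, 0 < m ∧ m < n + 1 ∧ ∀ a b, a < m → m ≤ b → b < n + 1 → f a < f b) ∨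
    (∃ m, 0 < m ∧ m < n + 1 ∧ ∀ a b, a < m → m ≤ b → b < n + 1 → f b < f a) := by
  classical
  -- `m` is the smallest cut of the first `n` terms
  obtain ⟨m, ⟨hm0, hmn, hm⟩, hmin⟩ : ∃ m, (0 < m ∧ m < n ∧
      ∀ a b, a < m → m ≤ b → b < n → f a < f b) ∧ ∀ m' < m, ¬ (0 < m' ∧ m' < n ∧
      ∀ a b, a < m' → m' ≤ b → b < n → f a < f b) :=
    ⟨Nat.find hcut, Nat.find_spec hcut, fun m' h => Nat.find_min hcut h⟩
  by_cases h1 : ∀ a < m, f a < f n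
  · left
    refine ⟨m, hm0, by omega, fun a b ha hb hbn => ?_⟩
    rcases Nat.lt_or_ge b n with h | h
    · exact hm a b ha hb h
    · obtain rfl : b = n := by omega
      exact h1 a ha
  push Not at h1
  obtain ⟨a0, ha0, hfa0⟩ := h1
  by_cases h2 : ∀ a < m, f n < f a
  · right
    refine ⟨n, by omega, by omega, fun a b ha hb hbn => ?_⟩
    obtain rfl : b = n := by omega
    rcases Nat.lt_or_ge a m with h | h
    · exact h2 a h
    · exact lt_of_le_of_lt hfa0 (hm a0 a ha0 h ha)
  push Not at h2
  obtain ⟨a1, ha1, hfa1⟩ := h2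
  exfalso
  by_cases h3 : ∃ x y, x < y ∧ y < m ∧ f n < f x ∧ f y < f n
  · obtain ⟨x, y, hxy, hym, hx, hy⟩ := h3
    exact h3142 x y m n hxy hym hmn (by omega) ⟨hy, hx, hm x m (by omega) le_rfl hmn⟩
  push Not at h3
  -- otherwise the first term above `f n` marks a smaller cut
  have hex : ∃ x, f n < f x ∧ x < m :=
    ⟨a0, lt_of_le_of_ne hfa0 (hinj a0 (by omega)).symm, ha0⟩
  obtain ⟨x, ⟨hx, hxm⟩, hxmin⟩ : ∃ x, (f n < f x ∧ x < m) ∧ ∀ y < x, ¬ (f n < f y ∧ y < m) :=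
    ⟨Nat.find hex, Nat.find_spec hex, fun m' h => Nat.find_min hex h⟩
  have hbelow : ∀ a < x, f a < f n := fun a ha => by
    have := hxmin a ha
    have := hinj a (by omega)
    push Not at *
    by_contra hc
    have : f n < f a := by omega
    have := hxmin a ha this
    omega
  have habove : ∀ b, x ≤ b → b < m → f n < f b := fun b hb hbm => by
    rcases hb.eq_or_lt with rfl | h
    · exact hx
    · exact lt_of_le_of_ne (h3 x b h hbm hx) (hinj b (by omega)).symm
  refine hmin x hxm ⟨?_, by omega, fun a b ha hb hbn => ?_⟩
  · rcases Nat.eq_zero_or_pos x with rfl | h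
    · have := habove a1 (by omega) ha1
      omega
    · exact h
  · rcases Nat.lt_or_ge b m with h | h
    · exact (hbelow a ha).trans (habove b hb h)
    · exact hm a b (by omega) h hbn

/-- An injective sequence of length at least `2` avoiding `2413` and `3142` has an increasing or a
decreasing cut. -/
theorem exists_cut (f : ℕ → ℤ) (n : ℕ) (hn : 2 ≤ n) (hinj : ∀ a b, a < b → b < n → f a ≠ f b)
    (h2413 : ∀ a b c d, a < b → b < c → c < d → d < n →
      ¬ (f c < f a ∧ f a < f d ∧ f d < f b))
    (h3142 : ∀ a b c d, a < b → b < c → c < d → d < n →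
      ¬ (f b < f d ∧ f d < f a ∧ f a < f c)) :
    (∃ m, 0 < m ∧ m < n ∧ ∀ a b, a < m → m ≤ b → b < n → f a < f b) ∨
    (∃ m, 0 < m ∧ m < n ∧ ∀ a b, a < m → m ≤ b → b < n → f b < f a) := by
  induction n, hn using Nat.le_induction with
  | base =>
    rcases lt_or_gt_of_ne (hinj 0 1 (by omega) (by omega)) with h | h
    · left
      refine ⟨1, by omega, by omega, fun a b ha hb hb' => ?_⟩
      obtain rfl : a = 0 := by omega
      obtain rfl : b = 1 := by omega
      exact h
    · right
      refine ⟨1, by omega, by omega, fun a b ha hb hb' => ?_⟩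
      obtain rfl : a = 0 := by omega
      obtain rfl : b = 1 := by omega
      exact h
  | succ n hn ih =>
    rcases ih (fun a b h h' => hinj a b h (by omega))
      (fun a b c d h h' h'' h''' => h2413 a b c d h h' h'' (by omega))
      (fun a b c d h h' h'' h''' => h3142 a b c d h h' h'' (by omega)) with h | h
    · exact cut_step f n (fun a ha => hinj a n ha (by omega)) h3142 h
    · -- negating the values exchanges the two patterns and the two kinds of cuts
      have := cut_step (fun i => - f i) n
        (fun a ha => by simpa using hinj a n ha (by omega))
        (fun a b c d h1 h2 h3 h4 => by
          have := h2413 a b c d h1 h2 h3 h4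
          simp only [neg_lt_neg_iff]
          tauto)
        (by simpa only [neg_lt_neg_iff] using h)
      simp only [neg_lt_neg_iff] at this
      exact this.symm

theorem contains2413_iff {n : ℕ} (π : Equiv.Perm (Fin n)) : ContainsPat π pattern2413 ↔
    ∃ a b c d : Fin n, a < b ∧ b < c ∧ c < d ∧ π c < π a ∧ π a < π d ∧ π d < π b := by
  constructor
  · rintro ⟨f, hf⟩
    exact ⟨f 0, f 1, f 2, f 3, f.lt_iff_lt.2 (by decide), f.lt_iff_lt.2 (by decide),
      f.lt_iff_lt.2 (by decide), (hf 2 0).1 (by decide), (hf 0 3).1 (by decide),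
      (hf 3 1).1 (by decide)⟩
  · rintro ⟨a, b, c, d, h1, h2, h3, h4, h5, h6⟩
    refine ⟨OrderEmbedding.ofStrictMono ![a, b, c, d] ?_, ?_⟩
    · rw [Fin.strictMono_iff_lt_succ]
      intro i
      fin_cases i <;> simpa
    · intro i j
      fin_cases i <;> fin_cases j <;> simp [pattern2413] <;> omega

theorem contains3142_iff {n : ℕ} (π : Equiv.Perm (Fin n)) : ContainsPat π pattern3142 ↔
    ∃ a b c d : Fin n, a < b ∧ b < c ∧ c < d ∧ π b < π d ∧ π d < π a ∧ π a < π c := by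
  constructor
  · rintro ⟨f, hf⟩
    exact ⟨f 0, f 1, f 2, f 3, f.lt_iff_lt.2 (by decide), f.lt_iff_lt.2 (by decide),
      f.lt_iff_lt.2 (by decide), (hf 1 3).1 (by decide), (hf 3 0).1 (by decide),
      (hf 0 2).1 (by decide)⟩
  · rintro ⟨a, b, c, d, h1, h2, h3, h4, h5, h6⟩
    refine ⟨OrderEmbedding.ofStrictMono ![a, b, c, d] ?_, ?_⟩
    · rw [Fin.strictMono_iff_lt_succ]
      intro i
      fin_cases i <;> simpa
    · intro i j
      fin_cases i <;> fin_cases j <;> simp [pattern3142] <;> omega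

theorem separable_iff {n : ℕ} (π : Equiv.Perm (Fin n)) : Separable π ↔
    ∀ a b c d : Fin n, a < b → b < c → c < d →
      ¬ (π c < π a ∧ π a < π d ∧ π d < π b) ∧ ¬ (π b < π d ∧ π d < π a ∧ π a < π c) := by
  rw [Separable, contains2413_iff, contains3142_iff]
  constructor
  · rintro ⟨h1, h2⟩ a b c d hab hbc hcd
    exact ⟨fun h => h1 ⟨a, b, c, d, hab, hbc, hcd, h⟩, fun h => h2 ⟨a, b, c, d, hab, hbc, hcd, h⟩⟩
  · intro h
    constructor
    · rintro ⟨a, b, c, d, hab, hbc, hcd, h'⟩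
      exact (h a b c d hab hbc hcd).1 h'
    · rintro ⟨a, b, c, d, hab, hbc, hcd, h'⟩
      exact (h a b c d hab hbc hcd).2 h'

/-- `m` is a cut of `π` when the first `m` values of `π` are the `m` smallest ones. -/
def IsCut {n : ℕ} (π : Equiv.Perm (Fin n)) (m : ℕ) : Prop :=
  ∀ i : Fin n, (i : ℕ) < m → (π i : ℕ) < m

theorem isCut_iff {n : ℕ} (π : Equiv.Perm (Fin n)) (m : ℕ) (hm : m < n) :
    IsCut π m ↔ ∀ a b : Fin n, (a : ℕ) < m → m ≤ (b : ℕ) → π a < π b := by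
  constructor
  · intro h a b ha hb
    have himg : (Finset.Iio (⟨m, hm⟩ : Fin n)).image π = Finset.Iio (⟨m, hm⟩ : Fin n) := by
      apply Finset.eq_of_subset_of_card_le
      · intro x hx
        obtain ⟨y, hy, rfl⟩ := Finset.mem_image.1 hx
        simp only [Finset.mem_Iio, Fin.lt_def] at hy ⊢
        exact h y hy
      · rw [Finset.card_image_of_injective _ π.injective]
    have hb' : ¬ (π b : ℕ) < m := by
      intro hlt
      have : π b ∈ (Finset.Iio (⟨m, hm⟩ : Fin n)).image π := by
        rw [himg]; simpa [Fin.lt_def] using hlt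
      obtain ⟨y, hy, hyb⟩ := Finset.mem_image.1 this
      have := π.injective hyb
      subst this
      simp [Fin.lt_def] at hy
      omega
    have := h a ha
    rw [Fin.lt_def]
    omega
  · intro h a ha
    by_contra hc
    have hsub : (Finset.Ici (⟨m, hm⟩ : Fin n)).image π ⊆ Finset.Ioi (π a) := by
      intro x hx
      obtain ⟨y, hy, rfl⟩ := Finset.mem_image.1 hx
      simp only [Finset.mem_Ici, Fin.le_def] at hy
      simpa using h a y ha hy
    have := Finset.card_le_card hsub
    rw [Finset.card_image_of_injective _ π.injective, Fin.card_Ici, Fin.card_Ioi] at this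
    simp at this
    omega

theorem compStat_eq {n : ℕ} (π : Equiv.Perm (Fin n)) [DecidablePred (IsCut π)] :
    compStat π = ((Finset.Icc 1 n).filter (IsCut π)).card := by
  unfold compStat
  congr

theorem isCut_self {n : ℕ} (π : Equiv.Perm (Fin n)) : IsCut π n := fun i _ => (π i).2

theorem one_le_compStat_iff {n : ℕ} (π : Equiv.Perm (Fin n)) : 1 ≤ compStat π ↔ 1 ≤ n := by
  classical
  rw [compStat_eq]
  constructor
  · intro h
    obtain ⟨x, hx⟩ := Finset.card_pos.1 h
    simp at hx
    omega
  · intro h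
    exact Finset.card_pos.2 ⟨n, by simp [isCut_self, h]⟩

theorem two_le_compStat_iff {n : ℕ} (π : Equiv.Perm (Fin n)) :
    2 ≤ compStat π ↔ ∃ m, 0 < m ∧ m < n ∧ IsCut π m := by
  classical
  rw [compStat_eq]
  constructor
  · intro h
    obtain ⟨x, hx, hxn⟩ := Finset.exists_mem_ne h n
    simp only [Finset.mem_filter, Finset.mem_Icc] at hx
    exact ⟨x, by omega, by omega, hx.2⟩
  · rintro ⟨m, h0, hn, hm⟩
    exact Finset.one_lt_card.2 ⟨m, by simp [hm]; omega, n, by simp [isCut_self]; omega, by omega⟩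

theorem compStat_eq_one_iff {n : ℕ} (π : Equiv.Perm (Fin n)) :
    compStat π = 1 ↔ 1 ≤ n ∧ ∀ m, 0 < m → m < n → ¬ IsCut π m := by
  have h1 := one_le_compStat_iff π
  have h2 := two_le_compStat_iff π
  constructor
  · intro h
    refine ⟨by omega, fun m h0 hn hm => ?_⟩
    have := h2.2 ⟨m, h0, hn, hm⟩
    omega
  · rintro ⟨hn, h⟩
    have := h1.2 hn
    have : ¬ 2 ≤ compStat π := fun h' => by
      obtain ⟨m, h3, h4, h5⟩ := h2.1 h'
      exact h m h3 h4 h5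
    omega

/-- Complementing the values swaps `2413` and `3142`. -/
theorem separable_rev {n : ℕ} (π : Equiv.Perm (Fin n)) :
    Separable (Fin.revPerm * π) ↔ Separable π := by
  simp only [separable_iff, Equiv.Perm.mul_apply, Fin.revPerm_apply, Fin.rev_lt_rev]
  refine forall₄_congr fun a b c d => ?_
  tauto

/-- For a separable permutation of length at least `2`, exactly one of the permutation and its
complement is sum-decomposable. -/
theorem compStat_rev {n : ℕ} (hn : 2 ≤ n) (π : Equiv.Perm (Fin n)) (hπ : Separable π) :
    compStat π = 1 ↔ 2 ≤ compStat (Fin.revPerm * π) := by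
  have h1 := (one_le_compStat_iff π).2 (by omega)
  have hor : 2 ≤ compStat π ∨ 2 ≤ compStat (Fin.revPerm * π) := by
    rw [separable_iff] at hπ
    let f : ℕ → ℤ := fun i => if h : i < n then ((π ⟨i, h⟩ : ℕ) : ℤ) else 0
    have hf : ∀ i (h : i < n), f i = ((π ⟨i, h⟩ : ℕ) : ℤ) := fun i h => dif_pos h
    have key := exists_cut f n hn
      (fun a b hab hb => by
        rw [hf a (by omega), hf b hb]
        intro h
        have := π.injective (Fin.ext (Int.ofNat.inj h))
        simp at this
        omega)
      (fun a b c d h1 h2 h3 h4 => by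
        rw [hf a (by omega), hf b (by omega), hf c (by omega), hf d h4]
        have := (hπ ⟨a, by omega⟩ ⟨b, by omega⟩ ⟨c, by omega⟩ ⟨d, h4⟩ h1 h2 h3).1
        simp only [Fin.lt_def] at this
        omega)
      (fun a b c d h1 h2 h3 h4 => by
        rw [hf a (by omega), hf b (by omega), hf c (by omega), hf d h4]
        have := (hπ ⟨a, by omega⟩ ⟨b, by omega⟩ ⟨c, by omega⟩ ⟨d, h4⟩ h1 h2 h3).2
        simp only [Fin.lt_def] at this
        omega)
    rcases key with ⟨m, h0, hm, h⟩ | ⟨m, h0, hm, h⟩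
    · left
      rw [two_le_compStat_iff]
      refine ⟨m, h0, hm, (isCut_iff π m hm).2 fun a b ha hb => ?_⟩
      have := h a b ha hb b.2
      rw [hf a a.2, hf b b.2] at this
      exact_mod_cast this
    · right
      rw [two_le_compStat_iff]
      refine ⟨m, h0, hm, (isCut_iff _ m hm).2 fun a b ha hb => ?_⟩
      have := h a b ha hb b.2
      rw [hf a a.2, hf b b.2] at this
      simp only [Equiv.Perm.mul_apply, Fin.revPerm_apply, Fin.rev_lt_rev]
      exact_mod_cast this
  -- comparing the first and the last value excludes that both are sum-decomposable
  have hand : ¬ (2 ≤ compStat π ∧ 2 ≤ compStat (Fin.revPerm * π)) := by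
    rintro ⟨h, h'⟩
    obtain ⟨m, h0, hm, hc⟩ := (two_le_compStat_iff _).1 h
    obtain ⟨m', h0', hm', hc'⟩ := (two_le_compStat_iff _).1 h'
    have e := (isCut_iff _ m hm).1 hc ⟨0, by omega⟩ ⟨n - 1, by omega⟩ h0
      (by change m ≤ n - 1; omega)
    have e' := (isCut_iff _ m' hm').1 hc' ⟨0, by omega⟩ ⟨n - 1, by omega⟩ h0'
      (by change m' ≤ n - 1; omega)
    simp only [Equiv.Perm.mul_apply, Fin.revPerm_apply, Fin.rev_lt_rev] at e'
    exact lt_asymm e e'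
  omega

end SepPerm

/-! ### Direct sums and the first component -/

namespace SepPerm

/-- The direct sum of two permutations: `τ`, shifted, is placed after and above `σ`. -/
def dsum {j l : ℕ} (σ : Equiv.Perm (Fin j)) (τ : Equiv.Perm (Fin l)) : Equiv.Perm (Fin (j + l)) :=
  finSumFinEquiv.permCongr (Equiv.sumCongr σ τ)

@[simp] theorem dsum_castAdd {j l : ℕ} (σ : Equiv.Perm (Fin j)) (τ : Equiv.Perm (Fin l))
    (i : Fin j) : dsum σ τ (Fin.castAdd l i) = Fin.castAdd l (σ i) := by
  simp [dsum, Equiv.permCongr_apply]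

@[simp] theorem dsum_natAdd {j l : ℕ} (σ : Equiv.Perm (Fin j)) (τ : Equiv.Perm (Fin l))
    (i : Fin l) : dsum σ τ (Fin.natAdd j i) = Fin.natAdd j (τ i) := by
  simp [dsum, Equiv.permCongr_apply]

theorem dsum_injective {j l : ℕ} {σ σ' : Equiv.Perm (Fin j)} {τ τ' : Equiv.Perm (Fin l)}
    (h : dsum σ τ = dsum σ' τ') : σ = σ' ∧ τ = τ' := by
  constructor
  · ext i
    have := congrArg (fun π => ((π (Fin.castAdd l i) : Fin (j + l)) : ℕ)) h
    simpa using this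
  · ext i
    have := congrArg (fun π => ((π (Fin.natAdd j i) : Fin (j + l)) : ℕ)) h
    simpa using this

theorem exists_dsum {j l : ℕ} (π : Equiv.Perm (Fin (j + l))) (h : IsCut π j) :
    ∃ (σ : Equiv.Perm (Fin j)) (τ : Equiv.Perm (Fin l)), dsum σ τ = π := by
  have hm : Set.MapsTo (finSumFinEquiv.symm.permCongr π)
      (Set.range (Sum.inl : Fin j → Fin j ⊕ Fin l)) (Set.range Sum.inl) := by
    rintro _ ⟨i, rfl⟩
    have hi := h (Fin.castAdd l i) i.2
    refine ⟨⟨_, hi⟩, ?_⟩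
    rw [Equiv.permCongr_apply, Equiv.eq_symm_apply]
    ext
    simp
  obtain ⟨⟨σ, τ⟩, hst⟩ := Equiv.Perm.mem_sumCongrHom_range_of_perm_mapsTo_inl hm
  refine ⟨σ, τ, ?_⟩
  have : Equiv.sumCongr σ τ = finSumFinEquiv.symm.permCongr π := hst
  rw [dsum, this]
  ext i
  simp [Equiv.permCongr_apply]

theorem isCut_dsum_of_le {j l : ℕ} (σ : Equiv.Perm (Fin j)) (τ : Equiv.Perm (Fin l)) {m : ℕ}
    (hm : m ≤ j) : IsCut (dsum σ τ) m ↔ IsCut σ m := by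
  constructor
  · intro h i hi
    simpa using h (Fin.castAdd l i) hi
  · intro h i
    refine Fin.addCases (fun i hi => ?_) (fun i hi => ?_) i
    · simpa using h i hi
    · simp at hi
      omega

theorem isCut_dsum_add {j l : ℕ} (σ : Equiv.Perm (Fin j)) (τ : Equiv.Perm (Fin l)) (m : ℕ) :
    IsCut (dsum σ τ) (j + m) ↔ IsCut τ m := by
  constructor
  · intro h i hi
    simpa using h (Fin.natAdd j i) (by simpa using hi)
  · intro h i
    refine Fin.addCases (fun i hi => ?_) (fun i hi => ?_) i
    · have := (σ i).2
      simp
      omega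
    · simpa using h i (by simpa using hi)

theorem compStat_dsum {j l : ℕ} (σ : Equiv.Perm (Fin j)) (τ : Equiv.Perm (Fin l)) :
    compStat (dsum σ τ) = compStat σ + compStat τ := by
  classical
  rw [compStat_eq, compStat_eq, compStat_eq]
  have : (Finset.Icc 1 (j + l)).filter (IsCut (dsum σ τ)) =
      (Finset.Icc 1 j).filter (IsCut σ) ∪
        ((Finset.Icc 1 l).filter (IsCut τ)).map (addLeftEmbedding j) := by
    ext m
    simp only [Finset.mem_filter, Finset.mem_Icc, Finset.mem_union, Finset.mem_map,
      addLeftEmbedding_apply]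
    constructor
    · rintro ⟨⟨h1, h2⟩, h⟩
      rcases Nat.lt_or_ge j m with hm | hm
      · obtain ⟨k, rfl⟩ := Nat.exists_eq_add_of_lt hm
        exact Or.inr ⟨k + 1, ⟨⟨by omega, by omega⟩, (isCut_dsum_add σ τ (k + 1)).1 h⟩, rfl⟩
      · exact Or.inl ⟨⟨h1, hm⟩, (isCut_dsum_of_le σ τ hm).1 h⟩
    · rintro (⟨⟨h1, h2⟩, h⟩ | ⟨k, ⟨⟨h1, h2⟩, h⟩, rfl⟩)
      · exact ⟨⟨h1, by omega⟩, (isCut_dsum_of_le σ τ h2).2 h⟩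
      · exact ⟨⟨by omega, by omega⟩, (isCut_dsum_add σ τ k).2 h⟩
  rw [this, Finset.card_union_of_disjoint, Finset.card_map]
  rw [Finset.disjoint_left]
  intro m h1 h2
  simp only [Finset.mem_filter, Finset.mem_Icc, Finset.mem_map, addLeftEmbedding_apply] at h1 h2
  obtain ⟨k, hk, rfl⟩ := h2
  omega

/-- Both forbidden patterns are sum-indecomposable, so an occurrence in a direct sum lies in one
of the summands. -/
theorem separable_dsum {j l : ℕ} (σ : Equiv.Perm (Fin j)) (τ : Equiv.Perm (Fin l)) :
    Separable (dsum σ τ) ↔ Separable σ ∧ Separable τ := by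
  simp only [separable_iff]
  constructor
  · intro h
    constructor
    · intro a b c d h1 h2 h3
      have := h (Fin.castAdd l a) (Fin.castAdd l b) (Fin.castAdd l c) (Fin.castAdd l d) h1 h2 h3
      simp only [dsum_castAdd] at this
      exact this
    · intro a b c d h1 h2 h3
      simpa using h (Fin.natAdd j a) (Fin.natAdd j b) (Fin.natAdd j c)
        (Fin.natAdd j d) (by simpa using h1) (by simpa using h2) (by simpa using h3)
  · rintro ⟨hσ, hτ⟩ a b c d
    refine Fin.addCases (fun a => ?_) (fun a => ?_) a <;>
    refine Fin.addCases (fun b => ?_) (fun b => ?_) b <;>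
    refine Fin.addCases (fun c => ?_) (fun c => ?_) c <;>
    refine Fin.addCases (fun d => ?_) (fun d => ?_) d <;>
    simp only [Fin.lt_def, dsum_castAdd, dsum_natAdd, Fin.val_castAdd, Fin.val_natAdd] <;>
    first
    | (intros; omega)
    | (intro h1 h2 h3
       first
       | exact hσ a b c d h1 h2 h3
       | (have := hτ a b c d (by omega) (by omega) (by omega)
          simp only [Fin.lt_def] at this
          omega))

/-- The number of separable permutations of length `n` whose number of components satisfies `Q`. -/
noncomputable def cnt (n : ℕ) (Q : ℕ → Prop) : ℕ :=
  Nat.card {π : Equiv.Perm (Fin n) // Separable π ∧ Q (compStat π)}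

/-- The length of the first component of `π`, its least positive cut. -/
noncomputable def firstCut {n : ℕ} (π : Equiv.Perm (Fin n)) : ℕ :=
  sInf {m | 0 < m ∧ IsCut π m}

theorem firstCut_spec {n : ℕ} (hn : 1 ≤ n) (π : Equiv.Perm (Fin n)) :
    0 < firstCut π ∧ IsCut π (firstCut π) :=
  Nat.sInf_mem (s := {m | 0 < m ∧ IsCut π m}) ⟨n, hn, isCut_self π⟩

theorem firstCut_le {n m : ℕ} (π : Equiv.Perm (Fin n)) (h0 : 0 < m) (hm : IsCut π m) :
    firstCut π ≤ m := Nat.sInf_le ⟨h0, hm⟩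

/-- Permutations with a first component of length `j` are the direct sums of an indecomposable
permutation of length `j` and an arbitrary permutation. -/
theorem card_firstCut (j l : ℕ) (Q : ℕ → Prop) (h0 : ¬ Q 0) :
    Nat.card {π : Equiv.Perm (Fin (j + l)) // (Separable π ∧ Q (compStat π)) ∧ firstCut π = j} =
      cnt j (fun k => k = 1) * cnt l (fun k => Q (k + 1)) := by
  rw [cnt, cnt, ← Nat.card_prod]
  symm
  refine Nat.card_congr (Equiv.ofBijective
    (fun x => ⟨dsum x.1.1 x.2.1, ⟨?_, ?_⟩, ?_⟩) ⟨?_, ?_⟩)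
  · exact (separable_dsum _ _).2 ⟨x.1.2.1, x.2.2.1⟩
  · rw [compStat_dsum, x.1.2.2, add_comm]
    exact x.2.2.2
  · obtain ⟨hj, hc⟩ := (compStat_eq_one_iff _).1 x.1.2.2
    have hs := firstCut_spec (by omega) (dsum x.1.1 x.2.1)
    have hle := firstCut_le (m := j) (dsum x.1.1 x.2.1) hj
      ((isCut_dsum_of_le _ _ le_rfl).2 (isCut_self _))
    by_contra hne
    exact hc _ hs.1 (by omega) ((isCut_dsum_of_le _ _ hle).1 hs.2)
  · rintro ⟨⟨σ, hσ⟩, ⟨τ, hτ⟩⟩ ⟨⟨σ', hσ'⟩, ⟨τ', hτ'⟩⟩ h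
    obtain ⟨h1, h2⟩ := dsum_injective (congrArg Subtype.val h)
    dsimp only at h1 h2
    subst h1 h2
    rfl
  · rintro ⟨π, ⟨hπ, hQ⟩, hf⟩
    have hn : 1 ≤ j + l := by
      rw [← one_le_compStat_iff π]
      by_contra hc
      have : compStat π = 0 := by omega
      exact h0 (this ▸ hQ)
    have hs := firstCut_spec hn π
    rw [hf] at hs
    obtain ⟨σ, τ, rfl⟩ := exists_dsum π hs.2
    obtain ⟨hσ, hτ⟩ := (separable_dsum _ _).1 hπ
    have h1 : compStat σ = 1 := by
      rw [compStat_eq_one_iff]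
      refine ⟨hs.1, fun m hm0 hmj hm => ?_⟩
      have := firstCut_le (dsum σ τ) hm0 ((isCut_dsum_of_le σ τ hmj.le).2 hm)
      omega
    refine ⟨⟨⟨σ, hσ, h1⟩, ⟨τ, hτ, ?_⟩⟩, rfl⟩
    rw [compStat_dsum, h1, add_comm] at hQ
    exact hQ

/-- Splitting off the first component. -/
theorem cnt_eq_sum (n : ℕ) (Q : ℕ → Prop) (h0 : ¬ Q 0) :
    cnt n Q = ∑ p ∈ Finset.HasAntidiagonal.antidiagonal n,
      cnt p.1 (fun k => k = 1) * cnt p.2 (fun k => Q (k + 1)) := by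
  classical
  rw [cnt, Nat.card_eq_fintype_card, Fintype.card_subtype,
    Finset.card_eq_sum_card_fiberwise (f := fun π => (firstCut π, n - firstCut π))
      (t := Finset.HasAntidiagonal.antidiagonal n)]
  · refine Finset.sum_congr rfl fun p hp => ?_
    obtain ⟨j, l⟩ := p
    obtain rfl : j + l = n := by simpa using hp
    rw [← card_firstCut j l Q h0, Nat.card_eq_fintype_card, Fintype.card_subtype,
      Finset.filter_filter]
    congr 1
    ext π
    simp only [Finset.mem_filter, Finset.mem_univ, true_and, Prod.mk.injEq]
    refine and_congr_right fun _ => ?_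
    omega
  · intro π hπ
    simp only [Finset.coe_filter, Finset.mem_univ, true_and, Set.mem_ofPred_eq] at hπ
    have hn : 1 ≤ n := by
      rw [← one_le_compStat_iff π]
      by_contra hc
      have : compStat π = 0 := by omega
      exact h0 (this ▸ hπ.2)
    have := firstCut_le π hn (isCut_self π)
    simp
    omega

/-- Complementation exchanges sum-indecomposable and sum-decomposable separable permutations. -/
theorem cnt_rev (n : ℕ) (hn : 2 ≤ n) : cnt n (fun k => k = 1) = cnt n (fun k => 2 ≤ k) := by
  refine Nat.card_congr (Equiv.subtypeEquiv (Equiv.mulLeft Fin.revPerm) fun π => ?_)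
  simp only [Equiv.coe_mulLeft, separable_rev]
  exact and_congr_right fun h => compStat_rev hn π h

theorem cnt_zero (Q : ℕ → Prop) (h0 : ¬ Q 0) : cnt 0 Q = 0 := by
  have : IsEmpty {π : Equiv.Perm (Fin 0) // Separable π ∧ Q (compStat π)} :=
    ⟨fun ⟨π, _, h⟩ => h0 (by simpa [compStat] using h)⟩
  exact Nat.card_of_isEmpty

theorem compStat_fin_one (π : Equiv.Perm (Fin 1)) : compStat π = 1 :=
  (compStat_eq_one_iff π).2 ⟨le_rfl, fun m h0 h1 => by omega⟩

theorem cnt_one_eq_one : cnt 1 (fun k => k = 1) = 1 := by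
  have : Unique {π : Equiv.Perm (Fin 1) // Separable π ∧ compStat π = 1} :=
    ⟨⟨⟨1, (separable_iff _).2 fun a b c d h => by omega, compStat_fin_one _⟩⟩,
      fun π => Subtype.ext (Subsingleton.elim _ _)⟩
  exact Nat.card_unique

theorem cnt_one_two_le : cnt 1 (fun k => 2 ≤ k) = 0 := by
  have : IsEmpty {π : Equiv.Perm (Fin 1) // Separable π ∧ 2 ≤ compStat π} :=
    ⟨fun ⟨π, _, h⟩ => by rw [compStat_fin_one] at h; omega⟩
  exact Nat.card_of_isEmpty

theorem cnt_one_le (n : ℕ) :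
    cnt n (fun k => 1 ≤ k) = cnt n (fun k => k = 1) + cnt n (fun k => 2 ≤ k) := by
  classical
  rw [cnt, cnt, cnt, Nat.card_eq_fintype_card, Nat.card_eq_fintype_card,
    Nat.card_eq_fintype_card, Fintype.card_subtype, Fintype.card_subtype, Fintype.card_subtype,
    ← Finset.card_union_of_disjoint]
  · congr 1
    ext π
    simp only [Finset.mem_filter, Finset.mem_univ, true_and, Finset.mem_union, ← and_or_left]
    refine and_congr_right fun _ => ?_
    omega
  · rw [Finset.disjoint_left]
    intro π h1 h2
    simp only [Finset.mem_filter, Finset.mem_univ, true_and] at h1 h2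
    omega

end SepPerm

/-! ### Generating functions -/

open PowerSeries in
/-- The uniqueness of the solution without constant term of `y = x + x y + y ^ 2`. -/
theorem series_unique (S y : PowerSeries ℤ) (hS : S = X + X * S + S * S)
    (hy : y = X + X * y + y * y) (hS0 : constantCoeff S = 0) (hy0 : constantCoeff y = 0) :
    S = y := by
  have h : (S - y) * (1 - X - S - y) = 0 := by linear_combination hS - hy
  rcases mul_eq_zero.1 h with h | h
  · exact sub_eq_zero.1 h
  · have := congrArg constantCoeff h
    simp [hS0, hy0] at this

open PowerSeries in
/-- The generating series of separable permutations with a given number of components is the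
generating series of Schröder paths with one fewer horizontal steps at height `0`, shifted. -/
theorem series_eq (k : ℕ) :
    PowerSeries.mk (fun n => (SepPerm.cnt n (fun m => m = k + 1) : ℤ)) =
      X * PowerSeries.mk (fun n => (STree.cnt n (fun t => t.flat = k) : ℤ)) := by
  -- `S`: nonempty separable permutations; `A k`: those with `k + 1` components, so `A 0` counts
  -- the indecomposable ones; `R`: all Schröder paths; `B k`: those with `k` flat steps at height `0`
  set S : PowerSeries ℤ := PowerSeries.mk (fun n => (SepPerm.cnt n (fun m => 1 ≤ m) : ℤ)) with hS
  set A : ℕ → PowerSeries ℤ :=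
    fun k => PowerSeries.mk (fun n => (SepPerm.cnt n (fun m => m = k + 1) : ℤ)) with hA
  set R : PowerSeries ℤ := PowerSeries.mk (fun n => (STree.cnt n (fun _ => True) : ℤ)) with hR
  set B : ℕ → PowerSeries ℤ :=
    fun k => PowerSeries.mk (fun n => (STree.cnt n (fun t => t.flat = k) : ℤ)) with hB
  change A k = X * B k
  have hA_succ : ∀ k, A (k + 1) = A 0 * A k := by
    intro k
    ext n
    simp only [hA, coeff_mk, coeff_mul]
    rw [SepPerm.cnt_eq_sum n _ (by omega)]
    push_cast
    simp
  have hdec : PowerSeries.mk (fun n => (SepPerm.cnt n (fun m => 2 ≤ m) : ℤ)) = A 0 * S := by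
    ext n
    simp only [hA, hS, coeff_mk, coeff_mul]
    rw [SepPerm.cnt_eq_sum n _ (by omega)]
    push_cast
    simp
  have hS1 : S = A 0 + A 0 * S := by
    rw [← hdec]
    ext n
    simp [hS, hA, SepPerm.cnt_one_le]
  have hI : A 0 = X + A 0 * S := by
    rw [← hdec]
    ext n
    rcases n with _ | _ | n
    · simp [hA, SepPerm.cnt_zero]
    · simp [hA, SepPerm.cnt_one_eq_one, SepPerm.cnt_one_two_le]
    · simp [hA, SepPerm.cnt_rev, coeff_X]
  have hS0 : constantCoeff S = 0 := by
    simp [hS, SepPerm.cnt_zero]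
  have hR1 : R = 1 + X * R + X * (R * R) := by
    ext n
    cases n with
    | zero => simp [hR, STree.cnt_zero]
    | succ n =>
      rw [map_add, map_add, coeff_succ_X_mul, coeff_succ_X_mul, coeff_mul, coeff_one]
      simp only [hR, coeff_mk]
      rw [STree.cnt_succ n _ (by simp)]
      push_cast
      simp
  have hB0 : B 0 = 1 + X * (R * B 0) := by
    ext n
    cases n with
    | zero => simp [hB, STree.cnt_zero, STree.flat]
    | succ n =>
      rw [map_add, coeff_succ_X_mul, coeff_mul, coeff_one]
      simp only [hB, hR, coeff_mk]
      rw [STree.cnt_succ n _ (by simp [STree.flat])]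
      have : STree.cnt n (fun t => t.hor.flat = 0) = 0 := by
        simp [STree.cnt, STree.flat]
      rw [this]
      push_cast
      simp
  have hBs : ∀ k, B (k + 1) = X * B k + X * (R * B (k + 1)) := by
    intro k
    ext n
    cases n with
    | zero => simp [hB, STree.cnt_zero, STree.flat]
    | succ n =>
      rw [map_add, coeff_succ_X_mul, coeff_succ_X_mul, coeff_mul]
      simp only [hB, hR, coeff_mk]
      rw [STree.cnt_succ n _ (by simp [STree.flat])]
      push_cast
      simp [STree.flat]
  have hSR : S = X * R := by
    refine series_unique _ _ ?_ ?_ hS0 (by simp)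
    · linear_combination (1 - S) * hS1 + (1 + S) * hI
    · linear_combination X * hR1
  have hne : (1 - S : PowerSeries ℤ) ≠ 0 := by
    intro h
    have := congrArg constantCoeff h
    simp [hS0] at this
  clear_value S A R B
  subst hSR
  induction k with
  | zero =>
    refine mul_right_cancel₀ hne ?_
    linear_combination hI - X * hB0
  | succ k ih =>
    refine mul_right_cancel₀ hne ?_
    rw [hA_succ, ih]
    linear_combination X * B k * hI - X * hBs k

/-- For all `n ≥ 0` and `1 ≤ k ≤ n+1`, the number of separable permutations of
`[n+1]` with `comp` equal to `k` equals the number of Schröder paths of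
semilength `n` with exactly `k-1` horizontal steps at height `0`. -/
theorem stmt17 (n k : ℕ) (hk : 1 ≤ k) (hkn : k ≤ n + 1) :
    Nat.card {π : Equiv.Perm (Fin (n + 1)) // Separable π ∧ compStat π = k} =
      Nat.card {w : List SStep // IsSchroeder n w ∧ h0 w = k - 1} := by
  obtain ⟨k, rfl⟩ := Nat.exists_eq_add_of_le' hk
  rw [Nat.add_sub_cancel, STree.card_schroeder]
  have := congrArg (PowerSeries.coeff (n + 1)) (series_eq k)
  rw [PowerSeries.coeff_succ_X_mul, PowerSeries.coeff_mk, PowerSeries.coeff_mk] at this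
  exact_mod_cast this
end

section
/- For all integers 0 ≤ k ≤ n, the number of Schröder paths of semilength n with exactly k hills equals the number of Schröder paths of semilength n with exactly k horizontal steps at height 0. -/
open SStep

/-- Exchange hills and horizontal steps at height `0` in a word starting at height `h`. A step `D`
at height `0` does not occur in a path; it is kept unchanged so that `swap` is an involution on all
words. -/
def swap : ℕ → List SStep → List SStep
  | _, [] => []
  | 0, H :: w => U :: D :: swap 0 w
  | 0, U :: D :: w => H :: swap 0 w
  | 0, U :: w => U :: swap 1 w
  | 0, D :: w => D :: swap 0 w
  | h + 1, U :: w => U :: swap (h + 2) w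
  | h + 1, D :: w => D :: swap h w
  | h + 1, H :: w => H :: swap (h + 1) w

/-- The word `w`, started at height `h`, ends at height `0` and never goes below `0`. -/
def GoodFrom (h : ℕ) (w : List SStep) : Prop :=
  h + w.count U = w.count D ∧ ∀ i : ℕ, (w.take i).count D ≤ h + (w.take i).count U

/-- The number of factors `UD` starting at height `0` when `w` is started at height `h`. -/
def hillsFrom (h : ℕ) (w : List SStep) : ℕ :=
  ((Finset.range w.length).filter (fun i =>
    w[i]? = some U ∧ w[i+1]? = some D ∧ h + (w.take i).count U = (w.take i).count D)).card

/-- The number of steps `H` at height `0` when `w` is started at height `h`. -/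
def h0From (h : ℕ) (w : List SStep) : ℕ :=
  ((Finset.range w.length).filter (fun i =>
    w[i]? = some H ∧ h + (w.take i).count U = (w.take i).count D)).card

lemma goodFrom_U (h : ℕ) (w : List SStep) : GoodFrom h (U :: w) ↔ GoodFrom (h + 1) w := by
  unfold GoodFrom
  refine and_congr (by simp; omega) ⟨fun H i => ?_, fun H i => ?_⟩
  · have := H (i + 1); simp at this; omega
  · cases i with
    | zero => simp
    | succ i => have := H i; simp; omega

lemma goodFrom_H (h : ℕ) (w : List SStep) : GoodFrom h (H :: w) ↔ GoodFrom h w := by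
  unfold GoodFrom
  refine and_congr (by simp) ⟨fun H i => ?_, fun H i => ?_⟩
  · have := H (i + 1); simp at this; omega
  · cases i with
    | zero => simp
    | succ i => have := H i; simp; omega

lemma goodFrom_D (h : ℕ) (w : List SStep) : GoodFrom (h + 1) (D :: w) ↔ GoodFrom h w := by
  unfold GoodFrom
  refine and_congr (by simp; omega) ⟨fun H i => ?_, fun H i => ?_⟩
  · have := H (i + 1); simp at this; omega
  · cases i with
    | zero => simp
    | succ i => have := H i; simp; omega

lemma not_goodFrom_D (w : List SStep) : ¬ GoodFrom 0 (D :: w) := by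
  intro h
  have := h.2 1
  simp at this

lemma h0From_U (h : ℕ) (w : List SStep) : h0From h (U :: w) = h0From (h + 1) w := by
  simp [h0From, Finset.card_filter, Finset.sum_range_succ', -Finset.sum_boole, add_assoc, add_comm 1]

lemma h0From_D (h : ℕ) (w : List SStep) : h0From (h + 1) (D :: w) = h0From h w := by
  simp [h0From, Finset.card_filter, Finset.sum_range_succ', -Finset.sum_boole, add_right_comm h 1]

lemma h0From_H (h : ℕ) (w : List SStep) :
    h0From h (H :: w) = h0From h w + if h = 0 then 1 else 0 := by
  simp [h0From, Finset.card_filter, Finset.sum_range_succ', -Finset.sum_boole]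

lemma hillsFrom_U (h : ℕ) (w : List SStep) :
    hillsFrom h (U :: w) = hillsFrom (h + 1) w + if w[0]? = some D ∧ h = 0 then 1 else 0 := by
  simp [hillsFrom, Finset.card_filter, Finset.sum_range_succ', -Finset.sum_boole, add_assoc, add_comm 1]

lemma hillsFrom_D (h : ℕ) (w : List SStep) : hillsFrom (h + 1) (D :: w) = hillsFrom h w := by
  simp [hillsFrom, Finset.card_filter, Finset.sum_range_succ', -Finset.sum_boole, add_right_comm h 1]

lemma hillsFrom_H (h : ℕ) (w : List SStep) : hillsFrom h (H :: w) = hillsFrom h w := by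
  simp [hillsFrom, Finset.card_filter, Finset.sum_range_succ', -Finset.sum_boole]

/-- Away from the axis `swap` keeps the first step, so it creates no new hill. -/
lemma swap_succ_head (h : ℕ) (w : List SStep) : (swap (h + 1) w)[0]? = w[0]? := by
  rcases w with _ | ⟨_ | _ | _, w⟩ <;> simp [swap]

/-- At the axis, a step `U` not followed by `D` is kept. -/
lemma swap_zero_U (w : List SStep) (hw : w[0]? ≠ some D) : swap 0 (U :: w) = U :: swap 1 w := by
  rcases w with _ | ⟨_ | _ | _, w⟩ <;> simp_all [swap]

lemma swap_swap (h : ℕ) (w : List SStep) : swap h (swap h w) = w := by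
  fun_induction swap h w with
  | case4 w hw ih =>
    rw [swap_zero_U, ih]
    rw [swap_succ_head]
    rcases w with _ | ⟨_ | _ | _, w⟩ <;> simp_all
  | _ => simp_all [swap]

/-- `swap` preserves validity and semilength, and the image has as many hills as the original has
horizontal steps at height `0`. The converse exchange follows from `swap_swap`. -/
lemma swap_spec (h : ℕ) (w : List SStep) (hw : GoodFrom h w) :
    GoodFrom h (swap h w) ∧
      (swap h w).count U + (swap h w).count H = w.count U + w.count H ∧
      hillsFrom h (swap h w) = h0From h w := by
  fun_induction swap h w with
  | case1 => exact ⟨hw, rfl, rfl⟩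
  | case2 w ih =>
    obtain ⟨h1, h2, h3⟩ := ih ((goodFrom_H _ _).1 hw)
    refine ⟨by rwa [goodFrom_U, goodFrom_D], by simp; omega, ?_⟩
    simp [hillsFrom_U, hillsFrom_D, h0From_H, h3]
  | case3 w ih =>
    obtain ⟨h1, h2, h3⟩ := ih (by rwa [goodFrom_U, goodFrom_D] at hw)
    refine ⟨by rwa [goodFrom_H], by simp; omega, ?_⟩
    simp [hillsFrom_H, h0From_U, h0From_D, h3]
  | case4 w hD ih =>
    obtain ⟨h1, h2, h3⟩ := ih (by rwa [goodFrom_U] at hw)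
    refine ⟨by rwa [goodFrom_U], by simp; omega, ?_⟩
    have hD' : w[0]? ≠ some D := by rcases w with _ | ⟨_ | _ | _, w⟩ <;> simp_all
    rw [hillsFrom_U, swap_succ_head, h3, h0From_U]
    simp [hD']
  | case5 w ih => exact absurd hw (not_goodFrom_D w)
  | case6 h w ih =>
    obtain ⟨h1, h2, h3⟩ := ih (by rwa [goodFrom_U] at hw)
    refine ⟨by rwa [goodFrom_U], by simp; omega, ?_⟩
    simp [hillsFrom_U, h0From_U, h3]
  | case7 h w ih =>
    obtain ⟨h1, h2, h3⟩ := ih (by rwa [goodFrom_D] at hw)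
    refine ⟨by rwa [goodFrom_D], by simp; omega, ?_⟩
    simp [hillsFrom_D, h0From_D, h3]
  | case8 h w ih =>
    obtain ⟨h1, h2, h3⟩ := ih (by rwa [goodFrom_H] at hw)
    refine ⟨by rwa [goodFrom_H], by simp; omega, ?_⟩
    simp [hillsFrom_H, h0From_H, h3]

lemma isSchroeder_iff (n : ℕ) (w : List SStep) :
    IsSchroeder n w ↔ GoodFrom 0 w ∧ w.count U + w.count H = n := by
  simp only [IsSchroeder, GoodFrom, zero_add]
  tauto

lemma hillsFrom_zero (w : List SStep) : hillsFrom 0 w = hills w := by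
  simp [hillsFrom, hills]

lemma h0From_zero (w : List SStep) : h0From 0 w = h0 w := by
  simp [h0From, h0]

lemma isSchroeder_swap {n : ℕ} {w : List SStep} (hw : IsSchroeder n w) :
    IsSchroeder n (swap 0 w) := by
  rw [isSchroeder_iff] at hw ⊢
  obtain ⟨h1, h2, -⟩ := swap_spec 0 w hw.1
  exact ⟨h1, h2.trans hw.2⟩

lemma hills_swap {n : ℕ} {w : List SStep} (hw : IsSchroeder n w) : hills (swap 0 w) = h0 w := by
  rw [← hillsFrom_zero, ← h0From_zero]
  exact (swap_spec 0 w ((isSchroeder_iff n w).1 hw).1).2.2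

lemma h0_swap {n : ℕ} {w : List SStep} (hw : IsSchroeder n w) : h0 (swap 0 w) = hills w := by
  rw [← hills_swap (isSchroeder_swap hw), swap_swap]

/-- For all `0 ≤ k ≤ n`, the number of Schröder paths of semilength `n` with
exactly `k` hills equals the number of Schröder paths of semilength `n` with
exactly `k` horizontal steps at height `0`. -/
theorem stmt18 (n k : ℕ) (hkn : k ≤ n) :
    Nat.card {w : List SStep // IsSchroeder n w ∧ hills w = k} =
      Nat.card {w : List SStep // IsSchroeder n w ∧ h0 w = k} := by
  exact Nat.card_congr
    { toFun := fun w => ⟨swap 0 w.1, isSchroeder_swap w.2.1, (h0_swap w.2.1).trans w.2.2⟩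
      invFun := fun w => ⟨swap 0 w.1, isSchroeder_swap w.2.1, (hills_swap w.2.1).trans w.2.2⟩
      left_inv := fun w => Subtype.ext (swap_swap 0 w.1)
      right_inv := fun w => Subtype.ext (swap_swap 0 w.1) }
end
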